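/- Let A ∈ ℤ^{m×n} of full column rank, b ∈ ℤ^m, c ∈ ℚⁿ, n a multiple of 3, with the integer program max{cᵀx : Ax ≤ b, x ∈ ℤⁿ} feasible. Then for every optimal LP vertex x* there is an optimal integral solution z* with ‖x* − z*‖_∞ < (√2/3)·n·Δ_{n−1}(A). -/

import Mathlib

/-!
The columns of `A` are independent because the feasible region has a vertex, so `z ↦ A z` embeds
`ℝⁿ` into `ℝᵐ`, and every `y` is a sum of `n / 3` vectors `v` which lie in faces of dimension at
most `3` of the cone of vectors sign-compatible with `y`, with `A v` between `0` and `A y`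
coordinatewise. If `‖x - z‖` is too large, some such summand `v` of `x - z` satisfies
`√2 Δ ≤ ‖v‖`.

For this `v`, Minkowski's theorem gives a nonzero integer vector `w` with `|A (w - s v)| < 1`
coordinatewise for some `s ∈ [0, 1]`: one selects `n - 1` rows of `A`, all but two of them
orthogonal to `v`, whose minor omitting a column where `|v|` is maximal is as large as possible.
On the rows orthogonal to `v` the integrality of `A w` forces `A (w - s v) = 0`, so what remains
is a symmetric convex region of the plane. Cramer's rule and the Plücker relation bound all its
`2 × 2` minors by `1`, and this makes its area larger than `2√2`.

By integrality `A w` has the signs of `A (x - z)` and `z + w` stays feasible. Optimality and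
extremality of `x` show that `z + w` is no worse than `z` and strictly closer to the constraints
tight at `x`, so that iterating yields an integer point within the bound.
-/

open Matrix

/-- `maxMinor A k` is the largest absolute value of a `k × k` minor of `A`. -/
def maxMinor {m n : ℕ} (A : Matrix (Fin m) (Fin n) ℤ) (k : ℕ) : ℕ :=
  Finset.sup (Finset.univ.filter fun p : (Fin k → Fin m) × (Fin k → Fin n) =>
      Function.Injective p.1 ∧ Function.Injective p.2)
    fun p => ((A.submatrix p.1 p.2).det).natAbs

open MeasureTheory Filter
open scoped Topology

section Minors

variable {m n k : ℕ}

lemma abs_det_submatrix_le_maxMinor (A : Matrix (Fin m) (Fin n) ℤ) (f : Fin k → Fin m)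
    (g : Fin k → Fin n) : |(A.submatrix f g).det| ≤ (maxMinor A k : ℤ) := by
  rw [Int.abs_eq_natAbs, Nat.cast_le]
  by_cases hf : Function.Injective f
  · by_cases hg : Function.Injective g
    · exact Finset.le_sup (f := fun p : (Fin k → Fin m) × (Fin k → Fin n) =>
        ((A.submatrix p.1 p.2).det).natAbs) (b := (f, g)) (by simp [hf, hg])
    · obtain ⟨a, b, hab, hne⟩ := Function.not_injective_iff.1 hg
      rw [det_zero_of_column_eq hne fun i => by rw [submatrix_apply, submatrix_apply, hab]]; simp
  · obtain ⟨a, b, hab, hne⟩ := Function.not_injective_iff.1 hf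
    rw [det_zero_of_row_eq hne (by ext j; rw [submatrix_apply, submatrix_apply, hab])]; simp

lemma submatrix_update_id_eq_updateRow {ι κ μ R : Type*} [DecidableEq μ] (M : Matrix ι κ R)
    (f : μ → ι) (p : μ) (i : ι) :
    M.submatrix (Function.update f p i) id = (M.submatrix f id).updateRow p (M.row i) := by
  ext a b
  rcases eq_or_ne a p with rfl | h
  · simp
  · simp [h]

end Minors

section DeterminantIdentities

variable {ι R : Type*} [Fintype ι] [DecidableEq ι] [CommRing R]

lemma det_smul_eq_sum_det_updateRow (N : Matrix ι ι R) (x : ι → R) :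
    N.det • x = ∑ a, (N.updateRow a x).det • N a := by
  have h := mulVec_cramer Nᵀ x
  rw [det_transpose, mulVec_transpose, vecMul_eq_sum] at h
  simpa only [cramer_transpose_apply] using h.symm

lemma det_mul_dotProduct (N : Matrix ι ι R) (x v : ι → R) :
    N.det * (x ⬝ᵥ v) = ∑ a, (N.updateRow a x).det * (N *ᵥ v) a := by
  have h := congrArg (· ⬝ᵥ v) (det_smul_eq_sum_det_updateRow N x)
  simp only [smul_dotProduct, sum_dotProduct, smul_eq_mul] at h
  exact h

lemma det_mul_det_updateRow_updateRow (N : Matrix ι ι R) {p q : ι} (hpq : p ≠ q) (x y : ι → R) :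
    N.det * ((N.updateRow p x).updateRow q y).det =
      (N.updateRow p x).det * (N.updateRow q y).det -
        (N.updateRow p y).det * (N.updateRow q x).det := by
  have hexp := congrArg (fun z => cramer (N.updateRow p x)ᵀ z q) (det_smul_eq_sum_det_updateRow N y)
  simp only [map_smul, map_sum, Finset.sum_apply, Pi.smul_apply, smul_eq_mul] at hexp
  simp only [cramer_transpose_apply] at hexp
  have hp : ((N.updateRow p x).updateRow q (N p)).det = -(N.updateRow q x).det := by
    have hswap : (N.updateRow p x).updateRow q (N p) =
        (N.updateRow q x).submatrix (Equiv.swap p q) id := by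
      ext a b
      rcases eq_or_ne a q with rfl | haq
      · simp [hpq]
      · rcases eq_or_ne a p with rfl | hap
        · simp [hpq]
        · simp [haq, hap, Equiv.swap_apply_of_ne_of_ne hap haq]
    rw [hswap, det_permute, Equiv.Perm.sign_swap hpq]
    simp
  have hq : ((N.updateRow p x).updateRow q (N q)).det = (N.updateRow p x).det := by
    have hrow : N.updateRow p x q = N q := updateRow_ne hpq.symm
    rw [← hrow, updateRow_eq_self]
  have hne (a : ι) (hap : a ≠ p) (haq : a ≠ q) :
      ((N.updateRow p x).updateRow q (N a)).det = 0 :=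
    det_zero_of_row_eq haq (by rw [updateRow_self, updateRow_ne haq, updateRow_ne hap])
  rw [hexp, ← Finset.sum_subset (Finset.subset_univ {p, q}), Finset.sum_pair hpq, hp, hq]
  · ring
  · intro a _ ha
    simp only [Finset.mem_insert, Finset.mem_singleton, not_or] at ha
    rw [hne a ha.1 ha.2, mul_zero]

end DeterminantIdentities

section PlanarArea

/-- The determinant of two vectors of the plane, i.e. twice the signed area of the triangle which
they span with the origin. -/
def planeDet (u v : ℝ × ℝ) : ℝ := u.1 * v.2 - u.2 * v.1

/-- The open triangle with vertices `0`, `u` and `v`; it is empty or flat when `u` and `v` are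
linearly dependent. -/
def openTriangle (u v : ℝ × ℝ) : Set (ℝ × ℝ) :=
  {x | ∃ s t : ℝ, 0 < s ∧ 0 < t ∧ s + t < 1 ∧ x = s • u + t • v}

lemma volume_unit_triangle :
    volume {x : ℝ × ℝ | 0 < x.1 ∧ 0 < x.2 ∧ x.1 + x.2 < 1} = ENNReal.ofReal (1 / 2) := by
  have hregion : {x : ℝ × ℝ | 0 < x.1 ∧ 0 < x.2 ∧ x.1 + x.2 < 1} =
      regionBetween (fun _ => 0) (fun x => 1 - x) (Set.Ioo (0 : ℝ) 1) := by
    ext ⟨a, b⟩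
    simp only [regionBetween, Set.mem_ofPred_eq, Set.mem_Ioo]
    constructor
    · rintro ⟨ha, hb, hab⟩
      exact ⟨⟨ha, by linarith⟩, hb, by linarith⟩
    · rintro ⟨⟨ha, -⟩, hb, hab⟩
      exact ⟨ha, hb, by linarith⟩
  have hintegrable : IntegrableOn (fun x : ℝ => 1 - x) (Set.Ioo 0 1) :=
    (continuous_const.sub continuous_id).integrableOn_Icc.mono_set Set.Ioo_subset_Icc_self
  have hint : ∫ x in Set.Ioo (0 : ℝ) 1, (1 - x) = 1 / 2 := by
    rw [← integral_Ioc_eq_integral_Ioo, ← intervalIntegral.integral_of_le zero_le_one,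
      intervalIntegral.integral_sub (by simp) (by simp)]
    norm_num
  rw [hregion, Measure.volume_eq_prod, volume_regionBetween_eq_integral integrableOn_zero
    hintegrable measurableSet_Ioo fun x hx => sub_nonneg.2 hx.2.le]
  simpa only [Pi.sub_apply, sub_zero] using congrArg ENNReal.ofReal hint

lemma volume_openTriangle (u v : ℝ × ℝ) :
    volume (openTriangle u v) = ENNReal.ofReal (|planeDet u v| / 2) := by
  let b := Module.Basis.finTwoProd ℝ
  let f : ℝ × ℝ →ₗ[ℝ] ℝ × ℝ := Matrix.toLin b b !![u.1, v.1; u.2, v.2]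
  have hf (x : ℝ × ℝ) : f x = x.1 • u + x.2 • v := by
    simp only [f, b, Matrix.toLin_finTwoProd_apply]
    ext <;> simp [mul_comm]
  have himage : openTriangle u v = f '' {x | 0 < x.1 ∧ 0 < x.2 ∧ x.1 + x.2 < 1} := by
    ext x
    simp only [openTriangle, Set.mem_ofPred_eq, Set.mem_image, hf, Prod.exists]
    exact ⟨fun ⟨s, t, hs, ht, hst, hx⟩ => ⟨s, t, ⟨hs, ht, hst⟩, hx.symm⟩,
      fun ⟨s, t, ⟨hs, ht, hst⟩, hx⟩ => ⟨s, t, hs, ht, hst, hx.symm⟩⟩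
  have hdet : LinearMap.det f = planeDet u v := by
    rw [LinearMap.det_toLin, Matrix.det_fin_two_of, planeDet, mul_comm v.1]
  rw [himage, Measure.addHaar_image_linearMap, volume_unit_triangle, hdet,
    ← ENNReal.ofReal_mul (abs_nonneg _), mul_one_div]

lemma ofReal_planeDet_le_volume {S : Set (ℝ × ℝ)} {u v : ℝ × ℝ}
    (hS : 0 < planeDet u v → openTriangle u v ⊆ S) :
    ENNReal.ofReal (planeDet u v / 2) ≤ volume S := by
  rcases le_or_gt (planeDet u v) 0 with h | h
  · simp [ENNReal.ofReal_of_nonpos (by linarith : planeDet u v / 2 ≤ 0)]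
  · rw [← abs_of_pos h, ← volume_openTriangle]
    exact measure_mono (hS h)

/-- The two triangles lie on different sides of the line spanned by `v`. -/
lemma ofReal_planeDet_add_le_volume {S : Set (ℝ × ℝ)} {u v w : ℝ × ℝ}
    (huv : 0 ≤ planeDet u v) (hvw : 0 ≤ planeDet v w)
    (hSuv : 0 < planeDet u v → openTriangle u v ⊆ S)
    (hSvw : 0 < planeDet v w → openTriangle v w ⊆ S) :
    ENNReal.ofReal ((planeDet u v + planeDet v w) / 2) ≤ volume S := by
  have hH : MeasurableSet {x | 0 < planeDet v x} := by
    unfold planeDet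
    exact measurableSet_lt measurable_const (by fun_prop)
  have hleft : 0 < planeDet v w → openTriangle v w ⊆ S ∩ {x | 0 < planeDet v x} := by
    intro h x hx
    refine ⟨hSvw h hx, ?_⟩
    obtain ⟨s, t, -, ht, -, rfl⟩ := hx
    have : planeDet v (s • v + t • w) = t * planeDet v w := by
      simp only [planeDet, Prod.fst_add, Prod.snd_add, Prod.smul_fst, Prod.smul_snd, smul_eq_mul]
      ring
    rw [Set.mem_ofPred_eq, this]
    exact mul_pos ht h
  have hright : 0 < planeDet u v → openTriangle u v ⊆ S \ {x | 0 < planeDet v x} := by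
    intro h x hx
    refine ⟨hSuv h hx, ?_⟩
    obtain ⟨s, t, hs, -, -, rfl⟩ := hx
    have : planeDet v (s • u + t • v) = -(s * planeDet u v) := by
      simp only [planeDet, Prod.fst_add, Prod.snd_add, Prod.smul_fst, Prod.smul_snd, smul_eq_mul]
      ring
    rw [Set.mem_ofPred_eq, this, not_lt, neg_nonpos]
    exact (mul_pos hs h).le
  rw [← measure_inter_add_sdiff S hH, add_comm (planeDet u v), add_div,
    ENNReal.ofReal_add (by positivity) (by positivity)]
  exact add_le_add (ofReal_planeDet_le_volume hleft) (ofReal_planeDet_le_volume hright)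

lemma two_mul_volume_inter_upper_le {S : Set (ℝ × ℝ)} (hS : ∀ x ∈ S, -x ∈ S) :
    2 * volume (S ∩ {x | 0 < x.2}) ≤ volume S := by
  have hupper : MeasurableSet {x : ℝ × ℝ | 0 < x.2} :=
    measurableSet_lt measurable_const measurable_snd
  have hneg : -(S ∩ {x | 0 < x.2}) ⊆ S \ {x | 0 < x.2} := by
    rintro x ⟨hx, hx2⟩
    have hx2' : ¬0 < x.2 := not_lt.2 (neg_pos.1 hx2).le
    exact ⟨neg_neg x ▸ hS _ hx, hx2'⟩
  calc 2 * volume (S ∩ {x | 0 < x.2})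
      = volume (S ∩ {x | 0 < x.2}) + volume (-(S ∩ {x | 0 < x.2})) := by
        rw [Measure.measure_neg, two_mul]
    _ ≤ volume (S ∩ {x | 0 < x.2}) + volume (S \ {x | 0 < x.2}) := by gcongr
    _ = volume S := measure_inter_add_sdiff S hupper

lemma ofReal_one_div_le_volume_upper_right {S : Set (ℝ × ℝ)} {h : ℝ} (hh : 0 < h)
    (hS₁ : openTriangle (1, 0) (1 / h, 1 / h) ⊆ S) (hS₂ : openTriangle (1 / h, 1 / h) (0, 1) ⊆ S) :
    ENNReal.ofReal (1 / h) ≤ volume (S ∩ {x | 0 < x.2} ∩ {x | 0 < x.1}) := by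
  have hdet₁ : planeDet (1, 0) (1 / h, 1 / h) = 1 / h := by simp [planeDet]
  have hdet₂ : planeDet (1 / h, 1 / h) (0, 1) = 1 / h := by simp [planeDet]
  have hinv : 0 < 1 / h := by positivity
  rw [show ENNReal.ofReal (1 / h) = ENNReal.ofReal
    ((planeDet (1, 0) (1 / h, 1 / h) + planeDet (1 / h, 1 / h) (0, 1)) / 2) by
      rw [hdet₁, hdet₂, add_self_div_two]]
  refine ofReal_planeDet_add_le_volume (hinv.le.trans hdet₁.ge) (hinv.le.trans hdet₂.ge)
    (fun _ x hx => ?_) (fun _ x hx => ?_)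
  · refine ⟨⟨hS₁ hx, ?_⟩, ?_⟩
    all_goals
      obtain ⟨s, t, hs, ht, -, rfl⟩ := hx
      simp only [Set.mem_ofPred_eq, Prod.fst_add, Prod.snd_add, Prod.smul_fst, Prod.smul_snd,
        smul_eq_mul]
      nlinarith [mul_pos ht hinv]
  · refine ⟨⟨hS₂ hx, ?_⟩, ?_⟩
    all_goals
      obtain ⟨s, t, hs, ht, -, rfl⟩ := hx
      simp only [Set.mem_ofPred_eq, Prod.fst_add, Prod.snd_add, Prod.smul_fst, Prod.smul_snd,
        smul_eq_mul]
      nlinarith [mul_pos hs hinv]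

lemma ofReal_half_le_volume_upper_left {S : Set (ℝ × ℝ)} {p q : ℝ} (hp : 0 ≤ p) (hq : 0 ≤ q)
    (hS₁ : openTriangle (0, 1) (-q, p) ⊆ S) (hS₂ : openTriangle (-q, p) (-1, 0) ⊆ S) :
    ENNReal.ofReal ((p + q) / 2) ≤ volume ((S ∩ {x | 0 < x.2}) \ {x | 0 < x.1}) := by
  have hdet₁ : planeDet (0, 1) (-q, p) = q := by simp [planeDet]
  have hdet₂ : planeDet (-q, p) (-1, 0) = p := by simp [planeDet]
  rw [show ENNReal.ofReal ((p + q) / 2) = ENNReal.ofReal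
    ((planeDet (0, 1) (-q, p) + planeDet (-q, p) (-1, 0)) / 2) by rw [hdet₁, hdet₂, add_comm]]
  refine ofReal_planeDet_add_le_volume (hq.trans hdet₁.ge) (hp.trans hdet₂.ge)
    (fun _ x hx => ?_) (fun hpos x hx => ?_)
  · refine ⟨⟨hS₁ hx, ?_⟩, ?_⟩
    all_goals
      obtain ⟨s, t, hs, ht, -, rfl⟩ := hx
      simp only [Set.mem_ofPred_eq, Prod.fst_add, Prod.snd_add, Prod.smul_fst, Prod.smul_snd,
        smul_eq_mul]
      nlinarith [mul_nonneg ht.le hp, mul_nonneg ht.le hq]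
  · rw [hdet₂] at hpos
    refine ⟨⟨hS₂ hx, ?_⟩, ?_⟩
    all_goals
      obtain ⟨s, t, hs, ht, -, rfl⟩ := hx
      simp only [Set.mem_ofPred_eq, Prod.fst_add, Prod.snd_add, Prod.smul_fst, Prod.smul_snd,
        smul_eq_mul]
      nlinarith [mul_pos hs hpos, mul_nonneg hs.le hq]

/-- The intersection of the strips `|P i * x + Q i * y| < 1`; its area replaces that of the ball in
the application of Minkowski's theorem. -/
def planarStrips {ι : Type*} (P Q : ι → ℝ) : Set (ℝ × ℝ) :=
  {x | ∀ i, |P i * x.1 + Q i * x.2| < 1}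

variable {ι : Type*} {P Q : ι → ℝ}

lemma neg_mem_planarStrips {x : ℝ × ℝ} (hx : x ∈ planarStrips P Q) : -x ∈ planarStrips P Q := by
  intro i
  have := hx i
  rwa [← abs_neg, neg_add, ← mul_neg, ← mul_neg] at this

lemma convex_planarStrips : Convex ℝ (planarStrips P Q) := by
  intro x hx y hy a b ha hb hab i
  have h := convex_Ioo (-1 : ℝ) 1 (abs_lt.1 (hx i)) (abs_lt.1 (hy i)) ha hb hab
  rw [smul_eq_mul, smul_eq_mul] at h
  rw [show P i * (a • x + b • y).1 + Q i * (a • x + b • y).2 =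
    a * (P i * x.1 + Q i * x.2) + b * (P i * y.1 + Q i * y.2) by
      simp only [Prod.fst_add, Prod.snd_add, Prod.smul_fst, Prod.smul_snd, smul_eq_mul]
      ring]
  exact abs_lt.2 h

lemma openTriangle_subset_planarStrips {u v : ℝ × ℝ} (hu : ∀ i, |P i * u.1 + Q i * u.2| ≤ 1)
    (hv : ∀ i, |P i * v.1 + Q i * v.2| ≤ 1) : openTriangle u v ⊆ planarStrips P Q := by
  rintro x ⟨s, t, hs, ht, hst, rfl⟩ i
  calc |P i * (s * u.1 + t * v.1) + Q i * (s * u.2 + t * v.2)|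
      = |s * (P i * u.1 + Q i * u.2) + t * (P i * v.1 + Q i * v.2)| := by congr 1; ring
    _ ≤ s * |P i * u.1 + Q i * u.2| + t * |P i * v.1 + Q i * v.2| := by
        grw [abs_add_le, abs_mul, abs_mul, abs_of_pos hs, abs_of_pos ht]
    _ ≤ s + t := by
        nlinarith [mul_le_mul_of_nonneg_left (hu i) hs.le, mul_le_mul_of_nonneg_left (hv i) ht.le]
    _ < 1 := hst

/-- In each quadrant of the upper half-plane, two triangles with vertices among `(1, 0)`,
`(1, 1) / (p + q)`, `(0, 1)`, `(-q, p)`, `(-1, 0)` fit into the strips. -/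
lemma ofReal_two_div_add_le_volume_planarStrips {p q : ℝ} (hp : 0 ≤ p) (hq : 0 ≤ q)
    (hpos : 0 < p + q) (hP : ∀ i, |P i| ≤ 1) (hQ : ∀ i, |Q i| ≤ 1)
    (hadd : ∀ i, |P i + Q i| ≤ p + q) (hdet : ∀ i, |p * Q i - q * P i| ≤ 1) :
    ENNReal.ofReal (2 / (p + q) + (p + q)) ≤ volume (planarStrips P Q) := by
  set h := p + q
  have hinv : 0 < 1 / h := by positivity
  set D := planarStrips P Q
  have hquad : MeasurableSet {x : ℝ × ℝ | 0 < x.1} :=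
    measurableSet_lt measurable_const measurable_fst
  have he (i) : |P i * 1 + Q i * 0| ≤ 1 := by simpa using hP i
  have hf (i) : |P i * 0 + Q i * 1| ≤ 1 := by simpa using hQ i
  have he' (i) : |P i * -1 + Q i * 0| ≤ 1 := by simpa using hP i
  have hg (i) : |P i * (1 / h) + Q i * (1 / h)| ≤ 1 := by
    rw [← add_mul, abs_mul, abs_of_pos hinv, mul_one_div, div_le_one hpos]
    exact hadd i
  have hr (i) : |P i * -q + Q i * p| ≤ 1 := by
    convert hdet i using 2
    ring
  have hright : ENNReal.ofReal (1 / h) ≤ volume (D ∩ {x | 0 < x.2} ∩ {x | 0 < x.1}) :=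
    ofReal_one_div_le_volume_upper_right hpos (openTriangle_subset_planarStrips he hg)
      (openTriangle_subset_planarStrips hg hf)
  have hleft : ENNReal.ofReal (h / 2) ≤ volume ((D ∩ {x | 0 < x.2}) \ {x | 0 < x.1}) :=
    ofReal_half_le_volume_upper_left hp hq (openTriangle_subset_planarStrips hf hr)
      (openTriangle_subset_planarStrips hr he')
  calc ENNReal.ofReal (2 / h + h) = 2 * (ENNReal.ofReal (1 / h) + ENNReal.ofReal (h / 2)) := by
        rw [← ENNReal.ofReal_add hinv.le (by positivity), ← ENNReal.ofReal_ofNat 2,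
          ← ENNReal.ofReal_mul zero_le_two]
        congr 1
        ring
    _ ≤ 2 * volume (D ∩ {x | 0 < x.2}) := by
        rw [← measure_inter_add_sdiff (D ∩ {x | 0 < x.2}) hquad]
        gcongr
    _ ≤ volume D := two_mul_volume_inter_upper_le fun _ => neg_mem_planarStrips

lemma two_mul_sqrt_two_lt {h : ℝ} (hpos : 0 < h) (hne : h ≠ √2) : 2 * √2 < 2 / h + h := by
  have hsq : √2 * √2 = 2 := Real.mul_self_sqrt zero_le_two
  have : 2 / h + h = 2 * √2 + (h - √2) ^ 2 / h := by
    field_simp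
    linear_combination -hsq
  have := div_pos (sq_pos_of_ne_zero (sub_ne_zero.2 hne)) hpos
  linarith

lemma exists_nonneg_forall_abs_add_le {K : Type*} [Field K] [LinearOrder K] [IsStrictOrderedRing K]
    [Finite ι] {P Q : ι → K} {i₀ : ι} (hPi₀ : P i₀ = 1) (hQi₀ : Q i₀ = 0)
    (hP : ∀ i, |P i| ≤ 1) (hQ : ∀ i, |Q i| ≤ 1) (hdet : ∀ i j, |P i * Q j - Q i * P j| ≤ 1) :
    ∃ p q : K, 0 ≤ p ∧ 0 ≤ q ∧ 1 ≤ p + q ∧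
      (∀ j, |P j + Q j| ≤ p + q) ∧ ∀ j, |p * Q j - q * P j| ≤ 1 := by
  have : Nonempty ι := ⟨i₀⟩
  obtain ⟨i, hi⟩ := Finite.exists_max fun i => |P i + Q i|
  have hone : 1 ≤ |P i + Q i| := by simpa [hPi₀, hQi₀] using hi i₀
  have hPi := abs_le.1 (hP i)
  have hQi := abs_le.1 (hQ i)
  rcases le_total 0 (P i + Q i) with h | h
  · rw [abs_of_nonneg h] at hi hone
    exact ⟨P i, Q i, by linarith, by linarith, hone, hi, hdet i⟩
  · rw [abs_of_nonpos h] at hi hone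
    refine ⟨-P i, -Q i, by linarith, by linarith, by linarith,
      fun j => (hi j).trans_eq (by ring), fun j => ?_⟩
    rw [← abs_neg]
    convert hdet i j using 2
    ring

/-- Since `h = p + q` is rational, it differs from `√2`, where `2 / h + h` attains its minimum
`2√2`. -/
theorem ofReal_two_mul_sqrt_two_lt_volume_planarStrips [Finite ι] {P Q : ι → ℚ} {i₀ j₀ : ι}
    (hPi₀ : P i₀ = 1) (hQi₀ : Q i₀ = 0) (hPj₀ : P j₀ = 0) (hQj₀ : Q j₀ = 1)
    (hdet : ∀ i j, |P i * Q j - Q i * P j| ≤ 1) :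
    ENNReal.ofReal (2 * √2) < volume (planarStrips (fun i => (P i : ℝ)) fun i => (Q i : ℝ)) := by
  have hP (i) : |P i| ≤ 1 := by simpa [hPj₀, hQj₀] using hdet i j₀
  have hQ (i) : |Q i| ≤ 1 := by simpa [hPi₀, hQi₀] using hdet i i₀
  obtain ⟨p, q, hp, hq, hone, hadd, hpq⟩ := exists_nonneg_forall_abs_add_le hPi₀ hQi₀ hP hQ hdet
  have hpos : (0 : ℝ) < p + q := by exact_mod_cast zero_lt_one.trans_le hone
  have hirr : (p + q : ℝ) ≠ √2 := fun h =>
    irrational_sqrt_two.ne_rat (p + q) (by rw [← h, Rat.cast_add])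
  have hlt := two_mul_sqrt_two_lt hpos hirr
  refine ((ENNReal.ofReal_lt_ofReal_iff (lt_trans (by positivity) hlt)).2 hlt).trans_le
    (ofReal_two_div_add_le_volume_planarStrips ?_ ?_ hpos ?_ ?_ ?_ ?_)
  · exact_mod_cast hp
  · exact_mod_cast hq
  · exact fun j => by exact_mod_cast hP j
  · exact fun j => by exact_mod_cast hQ j
  · exact fun j => by exact_mod_cast hadd j
  · exact fun j => by exact_mod_cast hpq j

end PlanarArea

section Minkowski

theorem exists_int_mulVec_mem_of_volume_lt {ι : Type*} [Fintype ι] [DecidableEq ι]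
    {R : Matrix ι ι ℝ} (hR : R.det ≠ 0) {K : Set (ι → ℝ)} (hsymm : ∀ x ∈ K, -x ∈ K)
    (hconv : Convex ℝ K) (hvol : ENNReal.ofReal |R.det| * 2 ^ Fintype.card ι < volume K) :
    ∃ w : ι → ℤ, w ≠ 0 ∧ R *ᵥ (fun i => (w i : ℝ)) ∈ K := by
  let L := (Submodule.span ℤ (Set.range (Pi.basisFun ℝ ι))).toAddSubgroup
  have hlt : volume (ZSpan.fundamentalDomain (Pi.basisFun ℝ ι)) * 2 ^ Module.finrank ℝ (ι → ℝ) <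
      volume (toLin' R ⁻¹' K) := by
    have hinv : ENNReal.ofReal |R.det⁻¹| * ENNReal.ofReal |R.det| = 1 := by
      rw [← ENNReal.ofReal_mul (abs_nonneg _), ← abs_mul, inv_mul_cancel₀ hR, abs_one,
        ENNReal.ofReal_one]
    rw [ZSpan.fundamentalDomain_pi_basisFun, volume_pi_pi, Module.finrank_pi,
      Measure.addHaar_preimage_linearMap _ (by rwa [LinearMap.det_toLin']), LinearMap.det_toLin']
    calc (∏ _ : ι, volume (Set.Ico (0 : ℝ) 1)) * 2 ^ Fintype.card ι
        = ENNReal.ofReal |R.det⁻¹| * (ENNReal.ofReal |R.det| * 2 ^ Fintype.card ι) := by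
          rw [← mul_assoc, hinv]
          simp
      _ < ENNReal.ofReal |R.det⁻¹| * volume K :=
          (ENNReal.mul_lt_mul_iff_right (by simpa using hR) ENNReal.ofReal_ne_top).2 hvol
  have : Countable L :=
    inferInstanceAs (Countable (Submodule.span ℤ (Set.range (Pi.basisFun ℝ ι))))
  obtain ⟨x, hx0, hxK⟩ := exists_ne_zero_mem_lattice_of_measure_mul_two_pow_lt_measure
    (ZSpan.isAddFundamentalDomain' (Pi.basisFun ℝ ι) volume)
    (fun x hx => by simpa [mulVec_neg] using hsymm _ hx) (hconv.linear_preimage (toLin' R)) hlt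
  have hint : ∀ i, ∃ z : ℤ, (z : ℝ) = (x : ι → ℝ) i := by
    simpa using ((Pi.basisFun ℝ ι).mem_span_iff_repr_mem ℤ (x : ι → ℝ)).1 x.2
  choose w hw using hint
  refine ⟨w, ?_, ?_⟩
  · rintro rfl
    exact hx0 (Subtype.ext (funext fun i => by simp [← hw i]))
  · rw [funext hw]
    exact hxK

lemma volume_fin_cons (k : ℕ) (I : Set ℝ) (S : Set (Fin k → ℝ)) :
    volume {x : Fin (k + 1) → ℝ | x 0 ∈ I ∧ Fin.tail x ∈ S} = volume I * volume S := by
  have h := (volume_preserving_piFinSuccAbove (fun _ : Fin (k + 1) => ℝ) 0).measure_preimage_equiv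
    (I ×ˢ S)
  rwa [Measure.volume_eq_prod, Measure.prod_prod] at h

/-- The product of a planar set and a cube: the first two coordinates range over `D`, the others
over `(-1, 1)`. It is the convex body to which Minkowski's theorem is applied. -/
def planarBox (d : ℕ) (D : Set (ℝ × ℝ)) : Set (Fin (d + 2) → ℝ) :=
  {u | (u 0, u 1) ∈ D ∧ ∀ a : Fin d, |u a.succ.succ| < 1}

lemma neg_mem_planarBox {d : ℕ} {D : Set (ℝ × ℝ)} (hD : ∀ x ∈ D, -x ∈ D) {u : Fin (d + 2) → ℝ}
    (hu : u ∈ planarBox d D) : -u ∈ planarBox d D :=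
  ⟨hD _ hu.1, fun a => by simpa using hu.2 a⟩

lemma convex_planarBox {d : ℕ} {D : Set (ℝ × ℝ)} (hD : Convex ℝ D) : Convex ℝ (planarBox d D) := by
  intro x hx y hy a b ha hb hab
  refine ⟨hD hx.1 hy.1 ha hb hab, fun c => ?_⟩
  have hball := convex_ball (0 : ℝ) 1
  simp only [Metric.ball, dist_zero_right, Real.norm_eq_abs] at hball
  exact hball (hx.2 c) (hy.2 c) ha hb hab

lemma volume_planarBox (d : ℕ) (D : Set (ℝ × ℝ)) :
    volume (planarBox d D) = volume D * 2 ^ d := by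
  let splitSecond : ℝ × (Fin (d + 1) → ℝ) ≃ᵐ ℝ × ℝ × (Fin d → ℝ) :=
    (MeasurableEquiv.refl ℝ).prodCongr (MeasurableEquiv.piFinSuccAbove (fun _ => ℝ) 0)
  let split : (Fin (d + 2) → ℝ) ≃ᵐ (ℝ × ℝ) × (Fin d → ℝ) :=
    ((MeasurableEquiv.piFinSuccAbove (fun _ => ℝ) 0).trans splitSecond).trans
      MeasurableEquiv.prodAssoc.symm
  have hsecond : MeasurePreserving splitSecond volume volume :=
    (MeasurePreserving.id volume).prod
      (volume_preserving_piFinSuccAbove (fun _ : Fin (d + 1) => ℝ) 0)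
  have hsplit : MeasurePreserving split volume volume :=
    (volume_preserving_prodAssoc (α₁ := ℝ) (β₁ := ℝ) (γ₁ := Fin d → ℝ)).symm.comp
      (hsecond.comp (volume_preserving_piFinSuccAbove (fun _ : Fin (d + 2) => ℝ) 0))
  have hpre : planarBox d D = split ⁻¹' (D ×ˢ Set.univ.pi fun _ => Set.Ioo (-1) 1) := by
    ext u
    simp only [planarBox, abs_lt, Set.mem_ofPred_eq, Set.mem_preimage, Set.mem_prod, Set.mem_pi,
      Set.mem_univ, forall_true_left]
    rfl
  rw [hpre, hsplit.measure_preimage_equiv, Measure.volume_eq_prod, Measure.prod_prod,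
    Real.volume_pi_Ioo]
  norm_num

variable {k : ℕ}

/-- Minkowski's theorem for the map `w ↦ (w t, C (w - s • v))`, where `s = w t / v t`: modulo its
first row, its matrix is obtained from `C` by adding multiples of the `t`-th unit vector. -/
theorem exists_int_mulVec_sub_smul_mem {C : Matrix (Fin k) (Fin (k + 1)) ℝ}
    {v : Fin (k + 1) → ℝ} {t : Fin (k + 1)} (hvt : v t ≠ 0)
    (hC : (C.submatrix id t.succAbove).det ≠ 0) {S : Set (Fin k → ℝ)} (hsymm : ∀ x ∈ S, -x ∈ S)
    (hconv : Convex ℝ S)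
    (hvol : ENNReal.ofReal |(C.submatrix id t.succAbove).det| * 2 ^ (k + 1) <
      ENNReal.ofReal (2 * |v t|) * volume S) :
    ∃ w : Fin (k + 1) → ℤ, w ≠ 0 ∧ ∃ s : ℝ, |s| < 1 ∧ w t = s * v t ∧
      C *ᵥ ((fun i => (w i : ℝ)) - s • v) ∈ S := by
  let R : Matrix (Fin (k + 1)) (Fin (k + 1)) ℝ := of (Fin.cons (Pi.single t 1)
    fun a => C a - Pi.single t ((C *ᵥ v) a / v t))
  have hdet : |R.det| = |(C.submatrix id t.succAbove).det| := by
    have hminor : R.submatrix Fin.succ t.succAbove = C.submatrix id t.succAbove := by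
      ext a j
      simp [R, Fin.succAbove_ne]
    rw [det_succ_row_zero, Finset.sum_eq_single_of_mem t (Finset.mem_univ t), hminor]
    · simp [R, abs_mul, abs_pow]
    · intro j _ hj
      simp [R, hj]
  have hR (w : Fin (k + 1) → ℝ) :
      R *ᵥ w = Fin.cons (w t) (C *ᵥ (w - (w t / v t) • v)) := by
    ext a
    refine Fin.cases ?_ (fun a => ?_) a
    · simp [R, mulVec]
    · change (C a - Pi.single t ((C *ᵥ v) a / v t)) ⬝ᵥ w = (C *ᵥ (w - (w t / v t) • v)) a
      rw [sub_dotProduct, single_dotProduct, mulVec_sub, mulVec_smul, Pi.sub_apply, Pi.smul_apply,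
        smul_eq_mul, div_mul_comm]
      rfl
  let K : Set (Fin (k + 1) → ℝ) := {x | x 0 ∈ Set.Ioo (-|v t|) |v t| ∧ Fin.tail x ∈ S}
  have hKsymm (x) (hx : x ∈ K) : -x ∈ K :=
    ⟨⟨neg_lt_neg hx.1.2, neg_lt.1 hx.1.1⟩, hsymm _ hx.2⟩
  have hKconv : Convex ℝ K := fun x hx y hy a b ha hb hab =>
    ⟨convex_Ioo _ _ hx.1 hy.1 ha hb hab, hconv hx.2 hy.2 ha hb hab⟩
  obtain ⟨w, hw, hmem⟩ := exists_int_mulVec_mem_of_volume_lt (R := R) (K := K)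
    (by rwa [← abs_ne_zero, hdet, abs_ne_zero]) hKsymm hKconv (by
      rw [volume_fin_cons, Real.volume_Ioo, sub_neg_eq_add, ← two_mul, hdet, Fintype.card_fin]
      exact hvol)
  rw [hR] at hmem
  refine ⟨w, hw, w t / v t, ?_, (div_mul_cancel₀ _ hvt).symm, hmem.2⟩
  rw [abs_div, div_lt_one (abs_pos.2 hvt)]
  exact abs_lt.2 hmem.1

end Minkowski

section Cones

variable {ι : Type*}

section NonnegativeVectors

variable [Finite ι] {a e : ι → ℝ}

lemma eventually_nonneg_add_smul (ha : 0 ≤ a) (he : ∀ i, a i = 0 → 0 ≤ e i) :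
    ∀ᶠ t in 𝓝[>] (0 : ℝ), 0 ≤ a + t • e := by
  refine (eventually_all.2 fun i => ?_).mono fun t ht => Pi.le_def.2 ht
  rcases (ha i).eq_or_lt with h | h
  · filter_upwards [self_mem_nhdsWithin] with t ht
    exact add_nonneg (ha i) (mul_nonneg (le_of_lt ht) (he i h.symm))
  · have hcont : Continuous fun t : ℝ => a i + t * e i := by fun_prop
    have hev : ∀ᶠ t in 𝓝 (0 : ℝ), 0 < a i + t * e i :=
      hcont.continuousAt.eventually (lt_mem_nhds (by simpa using h))
    exact (hev.filter_mono nhdsWithin_le_nhds).mono fun t ht => le_of_lt ht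

lemma exists_nonneg_add_smul_and_eq_zero (ha : 0 ≤ a) (he : ∀ i, a i = 0 → e i = 0)
    (hneg : ∃ i, e i < 0) : ∃ t : ℝ, 0 ≤ a + t • e ∧ ∃ i, a i ≠ 0 ∧ (a + t • e) i = 0 := by
  obtain ⟨i, hi : e i < 0, hmin⟩ :=
    Set.exists_min_image {i | e i < 0} (fun i => a i / -e i) (Set.toFinite _) hneg
  have ht : 0 ≤ a i / -e i := div_nonneg (ha i) (neg_nonneg.2 hi.le)
  refine ⟨a i / -e i, fun j => ?_, i, fun h => hi.ne (he i h), ?_⟩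
  · rcases le_or_gt 0 (e j) with h | h
    · exact add_nonneg (ha j) (mul_nonneg ht h)
    · have hle : a i / -e i * -e j ≤ a j := (le_div_iff₀ (neg_pos.2 h)).1 (hmin j h)
      simp only [Pi.zero_apply, Pi.add_apply, Pi.smul_apply, smul_eq_mul]
      linarith
  · have := hi.ne
    simp only [Pi.add_apply, Pi.smul_apply, smul_eq_mul]
    field_simp
    ring

end NonnegativeVectors

section Faces

variable {V : Type*} [AddCommGroup V] [Module ℝ V]

/-- The common kernel of the coordinates in `T` of the linear map `G`. -/
def kerOn (G : V →ₗ[ℝ] ι → ℝ) (T : Set ι) : Submodule ℝ V where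
  carrier := {z | ∀ i ∈ T, G z i = 0}
  add_mem' hx hy i hi := by simp [hx i hi, hy i hi]
  zero_mem' i _ := by simp
  smul_mem' c x hx i hi := by simp [hx i hi]

/-- For `0 ≤ G x`, the linear span of the minimal face containing `x` of the polyhedral cone
`{z | 0 ≤ G z}`. -/
def faceSpan (G : V →ₗ[ℝ] ι → ℝ) (x : V) : Submodule ℝ V := kerOn G {i | G x i = 0}

variable {G : V →ₗ[ℝ] ι → ℝ}

lemma kerOn_anti {S T : Set ι} (h : S ⊆ T) : kerOn G T ≤ kerOn G S :=
  fun _ hz i hi => hz i (h hi)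

lemma faceSpan_congr {G' : V →ₗ[ℝ] ι → ℝ} (h : ∀ z i, G z i = 0 ↔ G' z i = 0) (x : V) :
    faceSpan G x = faceSpan G' x := by
  ext z
  simp only [faceSpan, kerOn, Submodule.mem_mk, AddSubmonoid.mem_mk, AddSubsemigroup.mem_mk,
    Set.mem_ofPred_eq, h]

lemma kerOn_univ (hG : Function.Injective G) : kerOn G Set.univ = ⊥ :=
  (Submodule.eq_bot_iff _).2 fun z hz =>
    hG (by rw [map_zero]; exact funext fun i => hz i (Set.mem_univ i))

lemma kerOn_comp {W : Type*} [AddCommGroup W] [Module ℝ W] (G : W →ₗ[ℝ] ι → ℝ) (L : V →ₗ[ℝ] W)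
    (T : Set ι) : kerOn (G ∘ₗ L) T = (kerOn G T).comap L :=
  rfl

lemma faceSpan_eq_bot (hG : Function.Injective G) {x : V} (hx : G x = 0) : faceSpan G x = ⊥ := by
  rw [faceSpan, hx, ← kerOn_univ hG]
  congr 1
  exact Set.eq_univ_of_forall fun _ => rfl

lemma faceSpan_mono {x y : V} (hx : 0 ≤ G x) (hxy : G x ≤ G y) : faceSpan G x ≤ faceSpan G y :=
  kerOn_anti fun i (hi : G y i = 0) => le_antisymm (hi ▸ hxy i) (hx i)

lemma exists_pos_and_forall_mem_inf_kerOn [Finite ι] (T : Set ι) (W : Submodule ℝ V)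
    (f : V →ₗ[ℝ] ℝ) {x : V} (hxW : x ∈ W) (hx : ∀ i ∈ T, 0 ≤ G x i) (hfx : 0 < f x) :
    ∃ d ∈ W, (∀ i ∈ T, 0 ≤ G d i) ∧ 0 < f d ∧
      ∀ e ∈ W, f e = 0 → e ∈ kerOn G {i ∈ T | G d i = 0} → e ∈ kerOn G T := by
  obtain ⟨d, ⟨hdW, hd, hfd⟩, hmin⟩ := exists_minimalFor_of_wellFoundedLT
    (fun d => d ∈ W ∧ (∀ i ∈ T, 0 ≤ G d i) ∧ 0 < f d) (fun d => {i ∈ T | G d i ≠ 0})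
    ⟨x, hxW, hx, hfx⟩
  have hnonneg (e) (heW : e ∈ W) (hfe : f e = 0) (he : e ∈ kerOn G {i ∈ T | G d i = 0})
      (i) (hi : i ∈ T) : 0 ≤ G e i := by
    by_contra! hneg
    obtain ⟨t, hnn, j, hj, hzero⟩ := exists_nonneg_add_smul_and_eq_zero
      (a := fun i : T => G d i) (e := fun i : T => G e i) (fun i => hd i i.2)
      (fun i h => he i ⟨i.2, h⟩) ⟨⟨i, hi⟩, hneg⟩
    have hG (i) : G (d + t • e) i = G d i + t * G e i := by simp
    have hsub : {i ∈ T | G (d + t • e) i ≠ 0} ⊆ {i ∈ T | G d i ≠ 0} := fun i hi =>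
      ⟨hi.1, fun h => hi.2 (by rw [hG, h, he i ⟨hi.1, h⟩, mul_zero, add_zero])⟩
    have hle := hmin ⟨W.add_mem hdW (W.smul_mem t heW),
      fun i hi => by rw [hG]; exact hnn ⟨i, hi⟩, by simpa [hfe] using hfd⟩ hsub
    exact (hle ⟨j.2, hj⟩).2 (by rw [hG]; exact hzero)
  refine ⟨d, hdW, hd, hfd, fun e heW hfe he i hi => le_antisymm ?_ (hnonneg e heW hfe he i hi)⟩
  simpa using hnonneg (-e) (W.neg_mem heW) (by simpa using hfe) (neg_mem he) i hi

/-- The vectors `v` with `0 ≤ v ≤ y` for the order induced by `G` which lie in a face of dimension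
at most `k`. -/
def smallFacePart (G : V →ₗ[ℝ] ι → ℝ) (y : V) (k : ℕ) : Set V :=
  {v | 0 ≤ G v ∧ G v ≤ G y ∧ Module.finrank ℝ (faceSpan G v) ≤ k}

/-- A maximizer with the fewest strict inequalities among `0 ≤ G v ≤ G y` cannot be moved along any
direction preserving these equalities and the value of `f`. -/
lemma exists_maximizer_faceSpan_inf_faceSpan [Finite ι] [FiniteDimensional ℝ V]
    (hG : Function.Injective G) (f : V →ₗ[ℝ] ℝ) {y : V} {k : ℕ}
    (hmax : ∃ v ∈ smallFacePart G y k, ∀ u ∈ smallFacePart G y k, f u ≤ f v) :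
    ∃ v ∈ smallFacePart G y k, (∀ u ∈ smallFacePart G y k, f u ≤ f v) ∧
      ∀ e ∈ faceSpan G v ⊓ faceSpan G (y - v), f e = 0 → e = 0 := by
  let slack (v : V) : ι ⊕ ι → ℝ := Sum.elim (G v) (G (y - v))
  obtain ⟨v, ⟨hv, hvmax⟩, hmin⟩ := exists_minimalFor_of_wellFoundedLT
    (fun v => v ∈ smallFacePart G y k ∧ ∀ u ∈ smallFacePart G y k, f u ≤ f v)
    (fun v => {i | slack v i ≠ 0}) hmax
  refine ⟨v, hv, hvmax, fun e he hfe => ?_⟩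
  let dir : ι ⊕ ι → ℝ := Sum.elim (G e) (-G e)
  have hslack (t : ℝ) : slack (v + t • e) = slack v + t • dir := by
    ext (i | i) <;> simp [slack, dir]; ring
  have hslack_nonneg (u : V) : 0 ≤ slack u ↔ 0 ≤ G u ∧ G u ≤ G y := by
    simp [slack, Pi.le_def]
  have hdir : ∀ i, slack v i = 0 → dir i = 0 := by
    rintro (i | i) hi
    · exact he.1 i hi
    · exact neg_eq_zero.2 (he.2 i hi)
  by_contra hne
  obtain ⟨i, hi⟩ := Function.ne_iff.1 (mt (fun h => hG (h.trans (map_zero G).symm)) hne)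
  have hneg : ∃ i, dir i < 0 := by
    rcases lt_or_gt_of_ne hi with h | h
    · exact ⟨.inl i, h⟩
    · exact ⟨.inr i, neg_neg_of_pos h⟩
  obtain ⟨t, hnn, j, hj, hzero⟩ := exists_nonneg_add_smul_and_eq_zero
    ((hslack_nonneg v).2 ⟨hv.1, hv.2.1⟩) hdir hneg
  rw [← hslack] at hnn hzero
  have hsub {i} (h : slack v i = 0) : slack (v + t • e) i = 0 := by simp [hslack, h, hdir i h]
  have hface : faceSpan G (v + t • e) ≤ faceSpan G v :=
    kerOn_anti fun i hi => hsub (i := .inl i) hi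
  have hmem : v + t • e ∈ smallFacePart G y k :=
    ⟨((hslack_nonneg _).1 hnn).1, ((hslack_nonneg _).1 hnn).2,
      (Submodule.finrank_mono hface).trans hv.2.2⟩
  have hfv : f (v + t • e) = f v := by simp [hfe]
  exact hmin ⟨hmem, by simpa only [hfv] using hvmax⟩ (fun i hi h => hi (hsub h)) hj hzero

lemma finrank_le_one_of_forall_eq_zero {N : Submodule ℝ V} {f : V →ₗ[ℝ] ℝ}
    (h : ∀ e ∈ N, f e = 0 → e = 0) : Module.finrank ℝ N ≤ 1 := by
  have hinj : Function.Injective (f.domRestrict N) :=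
    (injective_iff_map_eq_zero _).2 fun e he => Subtype.ext (h e e.2 he)
  simpa using LinearMap.finrank_le_finrank_of_injective hinj

lemma finrank_add_finrank_le_of_inf [FiniteDimensional ℝ V] {H F E : Submodule ℝ V}
    (hH : H ≤ E) (hF : F ≤ E) {f : V →ₗ[ℝ] ℝ} (h : ∀ e ∈ H ⊓ F, f e = 0 → e = 0) :
    Module.finrank ℝ H + Module.finrank ℝ F ≤ Module.finrank ℝ E + 1 := by
  rw [← Submodule.finrank_sup_add_finrank_inf_eq]
  exact add_le_add (Submodule.finrank_mono (sup_le hH hF)) (finrank_le_one_of_forall_eq_zero h)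

/-- If the minimal face of `v` could not be left in the direction `d` within `smallFacePart G y k`,
then enlarging it by `d` gives a subspace of dimension more than `k`, which by the choice of `v` and
`d` meets `faceSpan G (y - v)` in dimension at most one. -/
lemma finrank_faceSpan_sub_add_le [Finite ι] [FiniteDimensional ℝ V] {f : V →ₗ[ℝ] ℝ}
    (hf : ∀ u, 0 ≤ G u → u ≠ 0 → 0 < f u) {v y : V} {k : ℕ} (hvy : v ≠ y)
    (hv0 : 0 ≤ G v) (hvle : G v ≤ G y) (hmax : ∀ u ∈ smallFacePart G y k, f u ≤ f v)
    (hinf : ∀ e ∈ faceSpan G v ⊓ faceSpan G (y - v), f e = 0 → e = 0) :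
    Module.finrank ℝ (faceSpan G (y - v)) + k ≤ Module.finrank ℝ (faceSpan G y) := by
  have hyv : 0 ≤ G (y - v) := by rw [map_sub]; exact sub_nonneg.2 hvle
  obtain ⟨d, hdF, hd, hfd, hdmin⟩ := exists_pos_and_forall_mem_inf_kerOn {i | G v i = 0}
    (faceSpan G (y - v)) f (fun _ h => h) (fun i _ => hyv i) (hf _ hyv (sub_ne_zero.2 hvy.symm))
  set H := kerOn G {i ∈ {i | G v i = 0} | G d i = 0}
  have hHk : k < Module.finrank ℝ H := by
    by_contra! hle
    obtain ⟨t, ht, htv, hty⟩ := ((eventually_mem_nhdsWithin).and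
      ((eventually_nonneg_add_smul hv0 (e := G d) hd).and (eventually_nonneg_add_smul hyv
        (e := -G d) fun i hi => (neg_eq_zero.2 (hdF i hi)).ge))).exists
    have hface : faceSpan G (v + t • d) ≤ H := kerOn_anti fun i hi => by
      rw [Set.mem_ofPred_eq, map_add, map_smul, Pi.add_apply, Pi.smul_apply, hi.1, hi.2, smul_zero,
        add_zero]
    have hmem : v + t • d ∈ smallFacePart G y k := by
      refine ⟨by simpa using htv, ?_, (Submodule.finrank_mono hface).trans hle⟩
      rw [map_sub, smul_neg, ← sub_eq_add_neg, sub_sub, sub_nonneg] at hty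
      simpa using hty
    have := hmax _ hmem
    rw [map_add, map_smul, smul_eq_mul] at this
    linarith [mul_pos (show 0 < t from ht) hfd]
  have hHy : H ≤ faceSpan G y := kerOn_anti fun i (hi : G y i = 0) => by
    have hvi : G v i = 0 := le_antisymm (hi ▸ hvle i) (hv0 i)
    exact ⟨hvi, hdF i (by simp [hi, hvi])⟩
  have hFy : faceSpan G (y - v) ≤ faceSpan G y := faceSpan_mono hyv (by simpa using hv0)
  have := finrank_add_finrank_le_of_inf hHy hFy fun e he hfe =>
    hinf e ⟨hdmin e he.2 hfe he.1, he.2⟩ hfe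
  omega

end Faces

section Decomposition

variable [Finite ι] {V : Type*} [NormedAddCommGroup V] [NormedSpace ℝ V] [FiniteDimensional ℝ V]
  {G : V →ₗ[ℝ] ι → ℝ}

lemma isCompact_smallFacePart (hG : Function.Injective G) (y : V) (k : ℕ) :
    IsCompact (smallFacePart G y k) := by
  have hcont : Continuous G := G.continuous_of_finiteDimensional
  have heq : smallFacePart G y k = (G ⁻¹' Set.Icc 0 (G y)) ∩
      ⋃ T ∈ {T : Set ι | Module.finrank ℝ (kerOn G T) ≤ k}, {v | ∀ i ∈ T, G v i = 0} := by
    ext v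
    simp only [smallFacePart, Set.mem_inter_iff, Set.mem_preimage, Set.mem_Icc, Set.mem_iUnion₂,
      Set.mem_ofPred_eq, and_assoc, exists_prop]
    refine and_congr_right fun _ => and_congr_right fun _ => ⟨fun h => ⟨_, h, fun _ hi => hi⟩, ?_⟩
    rintro ⟨T, hT, hvT⟩
    exact (Submodule.finrank_mono (kerOn_anti hvT)).trans hT
  rw [heq]
  refine ((LinearMap.isClosedEmbedding_of_injective (LinearMap.ker_eq_bot.2 hG)).isCompact_preimage
    isCompact_Icc).inter_right ((Set.toFinite _).isClosed_biUnion fun T _ => ?_)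
  simp only [Set.ofPred_forall]
  exact isClosed_biInter fun i _ => isClosed_eq (by fun_prop) continuous_const

theorem exists_finrank_faceSpan_le_and_sub_add_le (hG : Function.Injective G) {y : V}
    (hy : 0 ≤ G y) (k : ℕ) :
    ∃ v, 0 ≤ G v ∧ G v ≤ G y ∧ Module.finrank ℝ (faceSpan G v) ≤ k ∧
      Module.finrank ℝ (faceSpan G (y - v)) ≤ Module.finrank ℝ (faceSpan G y) - k := by
  have := Fintype.ofFinite ι
  let f : V →ₗ[ℝ] ℝ := ∑ i, LinearMap.proj i ∘ₗ G
  have hfG (u : V) : f u = ∑ i, G u i := by simp [f]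
  have hf (u : V) (hu : 0 ≤ G u) (hne : u ≠ 0) : 0 < f u := by
    rw [hfG]
    exact Finset.sum_pos' (fun i _ => hu i) (by
      obtain ⟨i, hi⟩ := Function.ne_iff.1 (mt (fun h => hG (h.trans (map_zero G).symm)) hne)
      exact ⟨i, Finset.mem_univ i, (hu i).lt_of_ne' hi⟩)
  have hzero : (0 : V) ∈ smallFacePart G y k :=
    ⟨(map_zero G).ge, by rwa [map_zero],
      by rw [faceSpan_eq_bot hG (map_zero G), finrank_bot]; exact Nat.zero_le k⟩
  obtain ⟨v, hv, hmax, hinf⟩ := exists_maximizer_faceSpan_inf_faceSpan hG f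
    ((isCompact_smallFacePart hG y k).exists_isMaxOn ⟨0, hzero⟩
      f.continuous_of_finiteDimensional.continuousOn)
  refine ⟨v, hv.1, hv.2.1, hv.2.2, ?_⟩
  rcases eq_or_ne v y with rfl | hvy
  · rw [faceSpan_eq_bot hG (by rw [sub_self, map_zero]), finrank_bot]
    exact Nat.zero_le _
  · have := finrank_faceSpan_sub_add_le hf hvy hv.1 hv.2.1 hmax hinf
    omega

theorem norm_lt_of_finrank_faceSpan_le (hG : Function.Injective G) {y : V} {c : ℝ} {k : ℕ}
    (hsmall : ∀ v ∈ smallFacePart G y k, ‖v‖ < c) {r : ℕ} {x : V} (hx : 0 ≤ G x)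
    (hxy : G x ≤ G y) (hr : Module.finrank ℝ (faceSpan G x) ≤ (r + 1) * k) :
    ‖x‖ < (r + 1) * c := by
  induction r generalizing x with
  | zero => simpa using hsmall x ⟨hx, hxy, by simpa using hr⟩
  | succ r ih =>
    obtain ⟨v, hv, hvx, hvk, hsub⟩ := exists_finrank_faceSpan_le_and_sub_add_le hG hx k
    have hxv : ‖x - v‖ < (r + 1) * c := by
      refine ih (by simpa using hvx) (le_trans (by simpa using hv) hxy) ?_
      rw [add_one_mul] at hr
      omega
    calc ‖x‖ = ‖v + (x - v)‖ := by rw [add_sub_cancel]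
      _ ≤ ‖v‖ + ‖x - v‖ := norm_add_le _ _
      _ < c + (r + 1) * c := add_lt_add (hsmall v ⟨hv, hvx.trans hxy, hvk⟩) hxv
      _ = ((r + 1 : ℕ) + 1) * c := by push_cast; ring

theorem exists_mem_uIcc_finrank_faceSpan_le (hG : Function.Injective G) {y : V} {c : ℝ} {k r : ℕ}
    (hr : Module.finrank ℝ V ≤ (r + 1) * k) (hy : (r + 1) * c ≤ ‖y‖) :
    ∃ v, (∀ i, G v i ∈ Set.uIcc 0 (G y i)) ∧ Module.finrank ℝ (faceSpan G v) ≤ k ∧ c ≤ ‖v‖ := by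
  let σ (i : ι) : ℝ := if G y i < 0 then -1 else 1
  have hσ (i : ι) : σ i ≠ 0 := by
    simp only [σ]
    split_ifs <;> norm_num
  let G' : V →ₗ[ℝ] ι → ℝ := LinearMap.pi fun i => σ i • (LinearMap.proj i ∘ₗ G)
  have hG'zero (z : V) (i : ι) : G' z i = 0 ↔ G z i = 0 := by simp [G', hσ i]
  have hG' : Function.Injective G' := (injective_iff_map_eq_zero G').2 fun z hz =>
    hG ((funext fun i => (hG'zero z i).1 (congrFun hz i)).trans (map_zero G).symm)
  have hmem (v : V) (hv : 0 ≤ G' v) (hvy : G' v ≤ G' y) (i : ι) : G v i ∈ Set.uIcc 0 (G y i) := by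
    have h0 : 0 ≤ σ i * G v i := hv i
    have h1 : σ i * G v i ≤ σ i * G y i := hvy i
    rw [Set.mem_uIcc]
    by_cases h : G y i < 0
    · simp only [σ, if_pos h] at h0 h1
      exact .inr ⟨by linarith, by linarith⟩
    · simp only [σ, if_neg h] at h0 h1
      exact .inl ⟨by linarith, by linarith⟩
  have hG'y : 0 ≤ G' y := fun i => by
    change 0 ≤ σ i * G y i
    by_cases h : G y i < 0
    · simp only [σ, if_pos h]; linarith
    · simp only [σ, if_neg h]; linarith
  by_contra! hlt
  refine hy.not_gt (norm_lt_of_finrank_faceSpan_le hG' (fun v hv => ?_) hG'y le_rfl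
    ((Submodule.finrank_le _).trans hr))
  exact hlt v (hmem v hv.1 hv.2.1) (faceSpan_congr hG'zero v ▸ hv.2.2)

end Decomposition

end Cones

section NonzeroMinors

variable {ι : Type*}

lemma mulVecLin_submatrix_succAbove {n : ℕ} (B : Matrix ι (Fin (n + 1)) ℝ) (t : Fin (n + 1)) :
    (B.submatrix id t.succAbove).mulVecLin =
      B.mulVecLin ∘ₗ Function.ExtendByZero.linearMap ℝ t.succAbove := by
  refine LinearMap.ext fun x => funext fun i => ?_
  have hsucc (j : Fin n) : Function.extend t.succAbove x 0 (t.succAbove j) = x j :=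
    t.succAbove_right_injective.extend_apply _ _ _
  simp [mulVec, dotProduct, Fin.sum_univ_succAbove _ t, hsucc]

lemma injective_mulVecLin_submatrix_succAbove {n : ℕ} {B : Matrix ι (Fin (n + 1)) ℝ}
    (hB : Function.Injective B.mulVecLin) (t : Fin (n + 1)) :
    Function.Injective (B.submatrix id t.succAbove).mulVecLin := by
  rw [mulVecLin_submatrix_succAbove, LinearMap.coe_comp]
  exact hB.comp (Function.extend_injective t.succAbove_right_injective _)

lemma finrank_kerOn_submatrix_succAbove_lt {n : ℕ} {B : Matrix ι (Fin (n + 1)) ℝ}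
    {t : Fin (n + 1)} {T : Set ι} {v : Fin (n + 1) → ℝ} (hv : v ∈ kerOn B.mulVecLin T)
    (hvt : v t ≠ 0) :
    Module.finrank ℝ (kerOn (B.submatrix id t.succAbove).mulVecLin T) <
      Module.finrank ℝ (kerOn B.mulVecLin T) := by
  let L : (Fin n → ℝ) →ₗ[ℝ] Fin (n + 1) → ℝ := Function.ExtendByZero.linearMap ℝ t.succAbove
  have hL : Function.Injective L := Function.extend_injective t.succAbove_right_injective _
  have hLt (x) : L x t = 0 :=
    Function.extend_apply' _ _ _ fun ⟨j, hj⟩ => Fin.succAbove_ne t j hj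
  rw [mulVecLin_submatrix_succAbove, kerOn_comp,
    (Submodule.equivMapOfInjective L hL ((kerOn B.mulVecLin T).comap L)).finrank_eq]
  refine Submodule.finrank_lt_finrank_of_lt (lt_of_le_of_ne (Submodule.map_comap_le _ _) ?_)
  intro heq
  rw [← heq] at hv
  obtain ⟨x, -, rfl⟩ := hv
  exact hvt (hLt x)

lemma exists_linearIndependent_cons {K W : Type*} [Field K] [AddCommGroup W] [Module K W]
    {r : ι → W} (hr : Submodule.span K (Set.range r) = ⊤) {k : ℕ}
    (hk : k < Module.finrank K W) {g : Fin k → ι} (hg : LinearIndependent K (r ∘ g)) :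
    ∃ i, LinearIndependent K (r ∘ (Fin.cons i g : Fin (k + 1) → ι)) := by
  by_contra! hdep
  have hmem (i) : r i ∈ Submodule.span K (Set.range (r ∘ g)) := by
    by_contra hi
    refine hdep i ?_
    rw [Fin.comp_cons]
    exact linearIndependent_finCons.2 ⟨hg, hi⟩
  have htop : Submodule.span K (Set.range (r ∘ g)) = ⊤ :=
    top_le_iff.1 (hr ▸ Submodule.span_le.2 (Set.range_subset_iff.2 hmem))
  have hle := finrank_range_le_card (R := K) (r ∘ g)
  rw [Set.finrank, htop, finrank_top, Fintype.card_fin] at hle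
  exact hle.not_gt hk

variable [Finite ι] {d : ℕ}

lemma finrank_span_row_image_add_finrank_kerOn {n : ℕ} (M : Matrix ι (Fin n) ℝ) (T : Set ι) :
    Module.finrank ℝ (Submodule.span ℝ (M.row '' T)) + Module.finrank ℝ (kerOn M.mulVecLin T) =
      n := by
  let MT : Matrix T (Fin n) ℝ := M.submatrix (↑) id
  have hker : kerOn M.mulVecLin T = LinearMap.ker MT.mulVecLin := by
    ext x
    exact ⟨fun h => funext fun i => h i i.2, fun h i hi => congrFun h ⟨i, hi⟩⟩
  have hrow : M.row '' T = Set.range MT.row := by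
    rw [Set.image_eq_range]
    rfl
  rw [hker, hrow, ← rank_eq_finrank_span_row]
  exact (LinearMap.finrank_range_add_finrank_ker MT.mulVecLin).trans (by simp)

lemma exists_det_submatrix_ne_zero {M : Matrix ι (Fin (d + 2)) ℝ}
    (hM : Function.Injective M.mulVecLin) {T : Set ι}
    (hT : Module.finrank ℝ (kerOn M.mulVecLin T) ≤ 2) :
    ∃ f : Fin (d + 2) → ι, (∀ a : Fin d, f a.succ.succ ∈ T) ∧ (M.submatrix f id).det ≠ 0 := by
  have hspan : Submodule.span ℝ (Set.range M.row) = ⊤ := by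
    have h := finrank_span_row_image_add_finrank_kerOn M Set.univ
    rw [kerOn_univ hM, finrank_bot, Set.image_univ, add_zero] at h
    exact Submodule.eq_top_of_finrank_eq (by simpa using h)
  have hd : d ≤ Module.finrank ℝ (Submodule.span ℝ (M.row '' T)) := by
    have := finrank_span_row_image_add_finrank_kerOn M T
    omega
  obtain ⟨l, hl, -, hli⟩ := Submodule.exists_fun_fin_finrank_span_eq ℝ (M.row '' T)
  choose g hgT hg using fun a => hl (Fin.castLE hd a)
  have hgli : LinearIndependent ℝ (M.row ∘ g) := by
    rw [show M.row ∘ g = l ∘ Fin.castLE hd from funext hg]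
    exact hli.comp _ (Fin.castLE_injective hd)
  obtain ⟨j, hj⟩ := exists_linearIndependent_cons hspan (by simp) hgli
  obtain ⟨i, hi⟩ := exists_linearIndependent_cons hspan (by simp) hj
  refine ⟨Fin.cons i (Fin.cons j g), fun a => by simpa using hgT a, ?_⟩
  rw [← isUnit_iff_ne_zero, ← isUnit_iff_isUnit_det]
  exact linearIndependent_rows_iff_isUnit.1 hi

end NonzeroMinors

section Cramer

variable {ι : Type*} {k : ℕ}

/-- The coefficient of the row `f a` when the row `i` of `M` is written, by Cramer's rule, as a
combination of the rows in `f`; it is `0` when these rows are dependent. -/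
def cramerCoeff (M : Matrix ι (Fin k) ℤ) (f : Fin k → ι) (a : Fin k) (i : ι) : ℚ :=
  (M.submatrix (Function.update f a i) id).det / (M.submatrix f id).det

variable {M : Matrix ι (Fin k) ℤ} {f : Fin k → ι}

lemma cramerCoeff_self (hf : (M.submatrix f id).det ≠ 0) (a : Fin k) :
    cramerCoeff M f a (f a) = 1 := by
  rw [cramerCoeff, Function.update_eq_self]
  exact div_self (Int.cast_ne_zero.2 hf)

lemma cramerCoeff_of_ne {a b : Fin k} (hab : a ≠ b) : cramerCoeff M f a (f b) = 0 := by
  rw [cramerCoeff, det_zero_of_row_eq hab, Int.cast_zero, zero_div]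
  ext j
  simp [hab.symm]

lemma abs_cramerCoeff_mul_sub_mul_le_one (hf : (M.submatrix f id).det ≠ 0) {p q : Fin k}
    (hpq : p ≠ q) {i j : ι} (hle : |(M.submatrix (Function.update (Function.update f p i) q j)
      id).det| ≤ |(M.submatrix f id).det|) :
    |cramerCoeff M f p i * cramerCoeff M f q j -
      cramerCoeff M f q i * cramerCoeff M f p j| ≤ 1 := by
  have hplucker := congrArg (Int.cast : ℤ → ℚ)
    (det_mul_det_updateRow_updateRow (M.submatrix f id) hpq (M.row i) (M.row j))
  simp only [← submatrix_update_id_eq_updateRow] at hplucker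
  simp only [Int.cast_mul, Int.cast_sub] at hplucker
  have hf' : ((M.submatrix f id).det : ℚ) ≠ 0 := Int.cast_ne_zero.2 hf
  have heq : cramerCoeff M f p i * cramerCoeff M f q j -
      cramerCoeff M f q i * cramerCoeff M f p j =
        (M.submatrix (Function.update (Function.update f p i) q j) id).det /
          (M.submatrix f id).det := by
    simp only [cramerCoeff]
    field_simp
    linarith
  rw [heq, abs_div, div_le_one (abs_pos.2 hf')]
  exact_mod_cast hle

lemma mulVec_eq_sum_cramerCoeff_mul (hf : (M.submatrix f id).det ≠ 0) (u : Fin k → ℝ) (i : ι) :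
    (M.map (Int.cast : ℤ → ℝ) *ᵥ u) i =
      ∑ a, (cramerCoeff M f a i : ℝ) * (M.map (Int.cast : ℤ → ℝ) *ᵥ u) (f a) := by
  have hf' : ((M.submatrix f id).det : ℝ) ≠ 0 := Int.cast_ne_zero.2 hf
  have hcast (g : Fin k → ι) :
      ((M.map (Int.cast : ℤ → ℝ)).submatrix g id).det = ((M.submatrix g id).det : ℝ) :=
    (Int.cast_det _).symm
  have h := det_mul_dotProduct ((M.map (Int.cast : ℤ → ℝ)).submatrix f id)
    ((M.map (Int.cast : ℤ → ℝ)).row i) u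
  simp only [← submatrix_update_id_eq_updateRow, hcast] at h
  rw [← mul_right_inj' hf']
  refine h.trans ?_
  rw [Finset.mul_sum]
  refine Finset.sum_congr rfl fun a _ => ?_
  rw [cramerCoeff, Rat.cast_div, Rat.cast_intCast, Rat.cast_intCast, ← mul_assoc,
    mul_div_cancel₀ _ hf']
  rfl

end Cramer

section ShortVectors

lemma exists_int_det_submatrix_ne_zero {ι : Type*} [Finite ι] {d : ℕ}
    {M : Matrix ι (Fin (d + 2)) ℤ} (hM : Function.Injective (M.map (Int.cast : ℤ → ℝ)).mulVecLin)
    {T : Set ι} (hT : Module.finrank ℝ (kerOn (M.map (Int.cast : ℤ → ℝ)).mulVecLin T) ≤ 2) :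
    ∃ f : Fin (d + 2) → ι, (∀ a : Fin d, f a.succ.succ ∈ T) ∧ (M.submatrix f id).det ≠ 0 := by
  obtain ⟨f, hfT, hf⟩ := exists_det_submatrix_ne_zero hM hT
  refine ⟨f, hfT, fun h => hf ?_⟩
  exact (Int.cast_det (M.submatrix f id)).symm.trans (by rw [h, Int.cast_zero])

lemma exists_maximal_abs_det_submatrix {ι : Type*} [Finite ι] {d : ℕ}
    {M : Matrix ι (Fin (d + 2)) ℤ} (hM : Function.Injective (M.map (Int.cast : ℤ → ℝ)).mulVecLin)
    {T : Set ι} (hT : Module.finrank ℝ (kerOn (M.map (Int.cast : ℤ → ℝ)).mulVecLin T) ≤ 2) :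
    ∃ f : Fin (d + 2) → ι, (∀ a : Fin d, f a.succ.succ ∈ T) ∧ (M.submatrix f id).det ≠ 0 ∧
      ∀ g : Fin (d + 2) → ι, (∀ a : Fin d, g a.succ.succ ∈ T) →
        |(M.submatrix g id).det| ≤ |(M.submatrix f id).det| := by
  obtain ⟨f₀, hf₀T, hf₀⟩ := exists_int_det_submatrix_ne_zero hM hT
  obtain ⟨f, hfT, hmax⟩ := Set.exists_max_image
    {g : Fin (d + 2) → ι | ∀ a : Fin d, g a.succ.succ ∈ T}
    (fun g => |(M.submatrix g id).det|) (Set.toFinite _) ⟨f₀, hf₀T⟩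
  exact ⟨f, hfT, abs_pos.1 ((abs_pos.2 hf₀).trans_le (hmax f₀ hf₀T)), hmax⟩

lemma maxMinor_pos {m d : ℕ} {A : Matrix (Fin m) (Fin (d + 3)) ℤ}
    (hA : Function.Injective (A.map (Int.cast : ℤ → ℝ)).mulVecLin) : 0 < maxMinor A (d + 2) := by
  have hinj := injective_mulVecLin_submatrix_succAbove hA 0
  obtain ⟨f, -, hf⟩ := exists_int_det_submatrix_ne_zero
    (M := A.submatrix id (Fin.succAbove 0)) (T := Set.univ) hinj
    ((kerOn_univ hinj).symm ▸ by simp)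
  exact_mod_cast (abs_pos.2 hf).trans_le (abs_det_submatrix_le_maxMinor A f (Fin.succAbove 0))

lemma ofReal_two_mul_sqrt_two_lt_volume_planarStrips_cramerCoeff {ι : Type*} [Finite ι] {d : ℕ}
    {M : Matrix ι (Fin (d + 2)) ℤ} {f : Fin (d + 2) → ι} (hf : (M.submatrix f id).det ≠ 0)
    (hmax : ∀ g : Fin (d + 2) → ι, (∀ a : Fin d, g a.succ.succ = f a.succ.succ) →
      |(M.submatrix g id).det| ≤ |(M.submatrix f id).det|) :
    ENNReal.ofReal (2 * √2) < volume (planarStrips (fun i => (cramerCoeff M f 0 i : ℝ))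
      fun i => (cramerCoeff M f 1 i : ℝ)) :=
  ofReal_two_mul_sqrt_two_lt_volume_planarStrips (cramerCoeff_self hf 0)
    (cramerCoeff_of_ne Fin.zero_ne_one.symm) (cramerCoeff_of_ne Fin.zero_ne_one)
    (cramerCoeff_self hf 1) fun i j => by
      refine abs_cramerCoeff_mul_sub_mul_le_one hf Fin.zero_ne_one (hmax _ fun a => ?_)
      have hne : a.succ.succ ≠ 1 := (Fin.succ_injective _).ne (Fin.succ_ne_zero a)
      rw [Function.update_of_ne hne, Function.update_of_ne (Fin.succ_ne_zero _)]

variable {m d : ℕ} {A : Matrix (Fin m) (Fin (d + 3)) ℤ} {v : Fin (d + 3) → ℝ} {t : Fin (d + 3)}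

lemma exists_int_mulVec_sub_smul_mem_planarBox {f : Fin (d + 2) → Fin m}
    (hvt : v t ≠ 0) (hv : √2 * maxMinor A (d + 2) ≤ |v t|)
    (hf : (A.submatrix f t.succAbove).det ≠ 0) {D : Set (ℝ × ℝ)} (hsymm : ∀ x ∈ D, -x ∈ D)
    (hconv : Convex ℝ D) (hD : ENNReal.ofReal (2 * √2) < volume D) :
    ∃ w : Fin (d + 3) → ℤ, w ≠ 0 ∧ ∃ s : ℝ, |s| < 1 ∧ w t = s * v t ∧
      (A.map (Int.cast : ℤ → ℝ)).submatrix f id *ᵥ ((fun i => (w i : ℝ)) - s • v) ∈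
        planarBox d D := by
  have hdet : (((A.map (Int.cast : ℤ → ℝ)).submatrix f id).submatrix id t.succAbove).det =
      ((A.submatrix f t.succAbove).det : ℝ) := (Int.cast_det _).symm
  refine exists_int_mulVec_sub_smul_mem hvt (by rwa [hdet, Int.cast_ne_zero])
    (fun _ => neg_mem_planarBox hsymm) (convex_planarBox hconv) ?_
  have hle : |((A.submatrix f t.succAbove).det : ℝ)| ≤ maxMinor A (d + 2) :=
    mod_cast abs_det_submatrix_le_maxMinor A f t.succAbove
  rw [hdet, volume_planarBox]
  calc ENNReal.ofReal |((A.submatrix f t.succAbove).det : ℝ)| * 2 ^ (d + 2 + 1)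
      = ENNReal.ofReal (|((A.submatrix f t.succAbove).det : ℝ)| * 8) * 2 ^ d := by
        rw [ENNReal.ofReal_mul (abs_nonneg _), ENNReal.ofReal_ofNat, pow_add, pow_add]
        ring
    _ ≤ ENNReal.ofReal (2 * |v t| * (2 * √2)) * 2 ^ d := by
        gcongr ENNReal.ofReal ?_ * 2 ^ d
        have hsqrt : √2 * √2 = 2 := Real.mul_self_sqrt zero_le_two
        have := mul_le_mul_of_nonneg_left hv (Real.sqrt_nonneg 2)
        rw [← mul_assoc, hsqrt] at this
        linarith
    _ = ENNReal.ofReal (2 * |v t|) * (ENNReal.ofReal (2 * √2) * 2 ^ d) := by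
        rw [ENNReal.ofReal_mul (by positivity), mul_assoc]
    _ < ENNReal.ofReal (2 * |v t|) * (volume D * 2 ^ d) := by
        have hpos : ENNReal.ofReal (2 * |v t|) ≠ 0 := by simpa using hvt
        exact (ENNReal.mul_lt_mul_iff_right hpos ENNReal.ofReal_ne_top).2
          ((ENNReal.mul_lt_mul_iff_left (by simp) (by simp)).2 hD)

lemma map_intCast_mulVec_intCast {ι κ : Type*} [Fintype κ] (A : Matrix ι κ ℤ) (w : κ → ℤ) :
    A.map (Int.cast : ℤ → ℝ) *ᵥ (fun j => (w j : ℝ)) = fun i => ((A *ᵥ w) i : ℝ) :=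
  funext fun i => (RingHom.map_mulVec (Int.castRingHom ℝ) A w i).symm

lemma mulVec_eq_mulVec_submatrix_succAbove {ι R : Type*} [NonUnitalNonAssocSemiring R] {n : ℕ}
    (B : Matrix ι (Fin (n + 1)) R) {u : Fin (n + 1) → R} {t : Fin (n + 1)} (hu : u t = 0) :
    B *ᵥ u = B.submatrix id t.succAbove *ᵥ (u ∘ t.succAbove) := by
  ext i
  simp [mulVec, dotProduct, Fin.sum_univ_succAbove _ t, hu]

lemma exists_int_forall_abs_mulVec_sub_smul_lt_one
    (hA : Function.Injective (A.map (Int.cast : ℤ → ℝ)).mulVecLin)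
    (hface : Module.finrank ℝ (faceSpan (A.map (Int.cast : ℤ → ℝ)).mulVecLin v) ≤ 3)
    (hvt : v t ≠ 0) (hv : √2 * maxMinor A (d + 2) ≤ |v t|) :
    ∃ w : Fin (d + 3) → ℤ, w ≠ 0 ∧ ∃ s : ℝ, |s| < 1 ∧
      ∀ i, |((A.map (Int.cast : ℤ → ℝ)) *ᵥ ((fun j => (w j : ℝ)) - s • v)) i| < 1 := by
  set B := A.map (Int.cast : ℤ → ℝ)
  set M := A.submatrix id t.succAbove
  have hM := injective_mulVecLin_submatrix_succAbove hA t
  obtain ⟨f, hfT, hf, hmax⟩ := exists_maximal_abs_det_submatrix (M := M)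
    (T := {i | B.mulVecLin v i = 0}) hM
    (Nat.lt_succ_iff.1 ((finrank_kerOn_submatrix_succAbove_lt (fun i hi => hi) hvt).trans_le hface))
  obtain ⟨w, hw, s, hs, hwt, hbox, hslab⟩ := exists_int_mulVec_sub_smul_mem_planarBox hvt hv hf
    (fun _ => neg_mem_planarStrips) convex_planarStrips
    (ofReal_two_mul_sqrt_two_lt_volume_planarStrips_cramerCoeff hf fun g hg =>
      hmax g fun a => hg a ▸ hfT a)
  refine ⟨w, hw, s, hs, fun i => ?_⟩
  set u := (fun j => (w j : ℝ)) - s • v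
  have hut : u t = 0 := by simp [u, hwt]
  have htail (a : Fin d) : (B *ᵥ u) (f a.succ.succ) = 0 := by
    have hint : (B *ᵥ u) (f a.succ.succ) = ((A *ᵥ w) (f a.succ.succ) : ℤ) := by
      have hva : (B *ᵥ v) (f a.succ.succ) = 0 := hfT a
      simp [u, mulVec_sub, mulVec_smul, hva, B, map_intCast_mulVec_intCast]
    have hlt : |(B *ᵥ u) (f a.succ.succ)| < 1 := hslab a
    rw [hint] at hlt ⊢
    exact_mod_cast Int.abs_lt_one_iff.1 (mod_cast hlt)
  have hexp : (B *ᵥ u) i = cramerCoeff M f 0 i * (B *ᵥ u) (f 0) +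
      cramerCoeff M f 1 i * (B *ᵥ u) (f 1) := by
    have h := mulVec_eq_sum_cramerCoeff_mul hf (u ∘ t.succAbove) i
    have hBM : B *ᵥ u = M.map (Int.cast : ℤ → ℝ) *ᵥ (u ∘ t.succAbove) :=
      mulVec_eq_mulVec_submatrix_succAbove B hut
    rw [← hBM, Fin.sum_univ_succ, Fin.sum_univ_succ,
      Finset.sum_eq_zero fun a _ => by rw [htail, mul_zero], add_zero] at h
    exact h
  rw [hexp]
  exact hbox i

theorem exists_int_nonneg_forall_abs_mulVec_sub_smul_lt_one
    (hA : Function.Injective (A.map (Int.cast : ℤ → ℝ)).mulVecLin)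
    (hface : Module.finrank ℝ (faceSpan (A.map (Int.cast : ℤ → ℝ)).mulVecLin v) ≤ 3)
    (hvt : v t ≠ 0) (hv : √2 * maxMinor A (d + 2) ≤ |v t|) :
    ∃ w : Fin (d + 3) → ℤ, w ≠ 0 ∧ ∃ s : ℝ, 0 ≤ s ∧ s ≤ 1 ∧
      ∀ i, |((A.map (Int.cast : ℤ → ℝ)) *ᵥ ((fun j => (w j : ℝ)) - s • v)) i| < 1 := by
  obtain ⟨w, hw, s, hs, hsub⟩ := exists_int_forall_abs_mulVec_sub_smul_lt_one hA hface
    hvt hv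
  rcases le_total 0 s with h | h
  · exact ⟨w, hw, s, h, (abs_lt.1 hs).2.le, hsub⟩
  · refine ⟨-w, neg_ne_zero.2 hw, -s, neg_nonneg.2 h, by linarith [(abs_lt.1 hs).1], fun i => ?_⟩
    have hneg : (fun j => ((-w) j : ℝ)) - -s • v = -((fun j => (w j : ℝ)) - s • v) := by
      ext j
      simp
      ring
    rw [hneg, mulVec_neg, Pi.neg_apply, abs_neg]
    exact hsub i

end ShortVectors

section ImprovingVectors

variable {m d : ℕ} {A : Matrix (Fin m) (Fin (d + 3)) ℤ}

theorem exists_int_mulVec_lt_max_add_one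
    (hA : Function.Injective (A.map (Int.cast : ℤ → ℝ)).mulVecLin) {y : Fin (d + 3) → ℝ} {r : ℕ}
    (hd : d + 3 ≤ (r + 1) * 3) (hy : (r + 1) * (√2 * maxMinor A (d + 2)) ≤ ‖y‖) :
    ∃ w : Fin (d + 3) → ℤ, w ≠ 0 ∧ ∀ i,
      (0 ≤ (A.map (Int.cast : ℤ → ℝ) *ᵥ y) i → 0 ≤ (A *ᵥ w) i) ∧
        ((A *ᵥ w) i : ℝ) < max 0 ((A.map (Int.cast : ℤ → ℝ) *ᵥ y) i) + 1 := by
  obtain ⟨v, hvy, hface, hv⟩ := exists_mem_uIcc_finrank_faceSpan_le hA (by simpa using hd) hy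
  have hpos : 0 < √2 * maxMinor A (d + 2) :=
    mul_pos (Real.sqrt_pos.2 two_pos) (Nat.cast_pos.2 (maxMinor_pos hA))
  obtain ⟨t, ht⟩ : ∃ t, √2 * maxMinor A (d + 2) ≤ |v t| := by
    by_contra! h
    exact hv.not_gt ((pi_norm_lt_iff hpos).2 h)
  obtain ⟨w, hw, s, hs0, hs1, hsub⟩ := exists_int_nonneg_forall_abs_mulVec_sub_smul_lt_one hA hface
    (abs_pos.1 (hpos.trans_le ht)) ht
  refine ⟨w, hw, fun i => ?_⟩
  have hi := hsub i
  simp only [mulVec_sub, mulVec_smul, map_intCast_mulVec_intCast, Pi.sub_apply, Pi.smul_apply,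
    smul_eq_mul, abs_lt] at hi
  have hmem : min 0 ((A.map (Int.cast : ℤ → ℝ) *ᵥ y) i) ≤ (A.map (Int.cast : ℤ → ℝ) *ᵥ v) i ∧
    (A.map (Int.cast : ℤ → ℝ) *ᵥ v) i ≤ max 0 ((A.map (Int.cast : ℤ → ℝ) *ᵥ y) i) := hvy i
  refine ⟨fun hyi => ?_, ?_⟩
  · rw [min_eq_left hyi] at hmem
    have : (-1 : ℝ) < (A *ᵥ w) i := by linarith [mul_nonneg hs0 hmem.1]
    exact Int.lt_iff_add_one_le.1 (mod_cast this)
  · have := mul_le_mul_of_nonneg_left hmem.2 hs0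
    have := mul_le_of_le_one_left (le_max_left 0 ((A.map (Int.cast : ℤ → ℝ) *ᵥ y) i)) hs1
    linarith

end ImprovingVectors

section Polyhedra

variable {ι κ : Type*} [Finite ι] [Fintype κ] {B : Matrix ι κ ℝ} {b : ι → ℝ} {x : κ → ℝ}

lemma eventually_mulVec_add_smul_le (hx : B *ᵥ x ≤ b) {e : κ → ℝ}
    (he : ∀ i, (B *ᵥ x) i = b i → (B *ᵥ e) i ≤ 0) :
    ∀ᶠ t in 𝓝[>] (0 : ℝ), B *ᵥ (x + t • e) ≤ b := by
  refine (eventually_nonneg_add_smul (a := b - B *ᵥ x) (e := -(B *ᵥ e)) (sub_nonneg.2 hx)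
    fun i hi => neg_nonneg.2 (he i (sub_eq_zero.1 hi).symm)).mono fun t ht => ?_
  rw [mulVec_add, mulVec_smul]
  rwa [smul_neg, ← sub_eq_add_neg, sub_sub, sub_nonneg] at ht

lemma eq_zero_of_mem_extremePoints (hx : x ∈ Set.extremePoints ℝ {x | B *ᵥ x ≤ b}) {e : κ → ℝ}
    (he : ∀ i, (B *ᵥ x) i = b i → (B *ᵥ e) i = 0) : e = 0 := by
  obtain ⟨t, ht, hadd, hsub⟩ := (eventually_mem_nhdsWithin.and
    ((eventually_mulVec_add_smul_le hx.1 fun i hi => (he i hi).le).and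
      (eventually_mulVec_add_smul_le (e := -e) hx.1 fun i hi => by
        rw [mulVec_neg, Pi.neg_apply, he i hi, neg_zero]))).exists
  have hmid : x ∈ openSegment ℝ (x + t • e) (x + t • -e) :=
    ⟨1 / 2, 1 / 2, one_half_pos, one_half_pos, add_halves 1, by module⟩
  have heq : x + t • e = x := hx.2 hadd hsub hmid
  exact (smul_eq_zero.1 (add_eq_left.1 heq)).resolve_left (ne_of_gt ht)

lemma injective_mulVecLin_of_mem_extremePoints
    (hx : x ∈ Set.extremePoints ℝ {x | B *ᵥ x ≤ b}) : Function.Injective B.mulVecLin :=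
  (injective_iff_map_eq_zero _).2 fun _ he =>
    eq_zero_of_mem_extremePoints hx fun i _ => congrFun he i

lemma dotProduct_nonpos_of_forall_le (hx : B *ᵥ x ≤ b) {c : κ → ℝ}
    (hopt : ∀ y, B *ᵥ y ≤ b → c ⬝ᵥ y ≤ c ⬝ᵥ x) {e : κ → ℝ}
    (he : ∀ i, (B *ᵥ x) i = b i → (B *ᵥ e) i ≤ 0) : c ⬝ᵥ e ≤ 0 := by
  obtain ⟨t, ht, hfeas⟩ :=
    (eventually_mem_nhdsWithin.and (eventually_mulVec_add_smul_le hx he)).exists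
  have := hopt _ hfeas
  rw [dotProduct_add, dotProduct_smul, add_le_iff_nonpos_right] at this
  exact nonpos_of_mul_nonpos_right this ht

end Polyhedra

section Proximity

lemma finite_setOf_norm_sub_intCast_lt {κ : Type*} [Fintype κ] (x : κ → ℝ) (R : ℝ) :
    {z : κ → ℤ | ‖x - fun j => (z j : ℝ)‖ < R}.Finite := by
  classical
  refine (Set.finite_Icc (fun j => ⌊x j - R⌋) fun j => ⌈x j + R⌉).subset fun z hz => ?_
  have hle (j : κ) : |x j - z j| ≤ R := (norm_le_pi_norm (x - fun j => (z j : ℝ)) j).trans hz.le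
  exact ⟨fun j => Int.cast_le.1 ((Int.floor_le _).trans (by linarith [(abs_le.1 (hle j)).2])),
    fun j => Int.cast_le.1 (le_trans (by linarith [(abs_le.1 (hle j)).1]) (Int.le_ceil _))⟩

variable {m d r : ℕ} {A : Matrix (Fin m) (Fin (d + 3)) ℤ} {b : Fin m → ℤ} {c x : Fin (d + 3) → ℝ}

lemma exists_int_improving_step
    (hx : x ∈ Set.extremePoints ℝ {x | A.map (Int.cast : ℤ → ℝ) *ᵥ x ≤ fun i => (b i : ℝ)})
    (hopt : ∀ y, A.map (Int.cast : ℤ → ℝ) *ᵥ y ≤ (fun i => (b i : ℝ)) → c ⬝ᵥ y ≤ c ⬝ᵥ x)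
    (hd : d + 3 ≤ (r + 1) * 3) {z : Fin (d + 3) → ℤ} (hz : A *ᵥ z ≤ b)
    (hfar : (r + 1) * (√2 * maxMinor A (d + 2)) ≤ ‖x - fun j => (z j : ℝ)‖) :
    ∃ w : Fin (d + 3) → ℤ, A *ᵥ (z + w) ≤ b ∧ 0 ≤ c ⬝ᵥ (fun j => (w j : ℝ)) ∧
      (∀ i, (A.map (Int.cast : ℤ → ℝ) *ᵥ x) i = b i → 0 ≤ (A *ᵥ w) i) ∧
      ∃ i, (A.map (Int.cast : ℤ → ℝ) *ᵥ x) i = b i ∧ 0 < (A *ᵥ w) i := by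
  set B := A.map (Int.cast : ℤ → ℝ)
  obtain ⟨w, hw, hAw⟩ :=
    exists_int_mulVec_lt_max_add_one (injective_mulVecLin_of_mem_extremePoints hx) hd hfar
  have hzr (i : Fin m) : ((A *ᵥ z) i : ℝ) ≤ b i := mod_cast hz i
  have hxr (i : Fin m) : (B *ᵥ x) i ≤ b i := hx.1 i
  have hy (i : Fin m) : (B *ᵥ (x - fun j => (z j : ℝ))) i = (B *ᵥ x) i - (A *ᵥ z) i := by
    rw [mulVec_sub, map_intCast_mulVec_intCast, Pi.sub_apply]
  have hBw (i : Fin m) : (B *ᵥ fun j => (w j : ℝ)) i = (A *ᵥ w) i := by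
    rw [map_intCast_mulVec_intCast]
  have htight (i : Fin m) (hi : (B *ᵥ x) i = b i) : 0 ≤ (A *ᵥ w) i :=
    (hAw i).1 (by rw [hy, hi]; exact sub_nonneg.2 (hzr i))
  refine ⟨w, fun i => ?_, ?_, htight, ?_⟩
  · have hmax : max 0 ((B *ᵥ x) i - (A *ᵥ z) i) ≤ b i - (A *ᵥ z) i :=
      max_le (sub_nonneg.2 (hzr i)) (sub_le_sub_right (hxr i) _)
    have hlt := (hAw i).2
    rw [hy] at hlt
    have : ((A *ᵥ z) i + (A *ᵥ w) i : ℝ) < b i + 1 := by linarith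
    rw [mulVec_add, Pi.add_apply]
    exact Int.lt_add_one_iff.1 (mod_cast this)
  · have := dotProduct_nonpos_of_forall_le hx.1 hopt (e := -fun j => (w j : ℝ)) fun i hi => by
      rw [mulVec_neg, Pi.neg_apply, hBw, neg_nonpos]
      exact_mod_cast htight i hi
    rwa [dotProduct_neg, neg_nonpos] at this
  · by_contra! hle
    refine hw (funext fun j => ?_)
    have hzero := eq_zero_of_mem_extremePoints hx (e := fun j => (w j : ℝ)) fun i hi => by
      rw [hBw, le_antisymm (hle i hi) (htight i hi), Int.cast_zero]
    exact Int.cast_eq_zero.1 (congrFun hzero j)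

lemma exists_int_dotProduct_le_and_norm_sub_lt
    (hx : x ∈ Set.extremePoints ℝ {x | A.map (Int.cast : ℤ → ℝ) *ᵥ x ≤ fun i => (b i : ℝ)})
    (hopt : ∀ y, A.map (Int.cast : ℤ → ℝ) *ᵥ y ≤ (fun i => (b i : ℝ)) → c ⬝ᵥ y ≤ c ⬝ᵥ x)
    (hd : d + 3 ≤ (r + 1) * 3) {z : Fin (d + 3) → ℤ} (hz : A *ᵥ z ≤ b) :
    ∃ z' : Fin (d + 3) → ℤ, A *ᵥ z' ≤ b ∧
      c ⬝ᵥ (fun j => (z j : ℝ)) ≤ c ⬝ᵥ (fun j => (z' j : ℝ)) ∧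
      ‖x - fun j => (z' j : ℝ)‖ < (r + 1) * (√2 * maxMinor A (d + 2)) := by
  classical
  let tight := Finset.univ.filter fun i => (A.map (Int.cast : ℤ → ℝ) *ᵥ x) i = b i
  let slack (z : Fin (d + 3) → ℤ) : ℕ := ∑ i ∈ tight, (b i - (A *ᵥ z) i).toNat
  obtain ⟨z', ⟨hz', hle⟩, hmin⟩ := exists_minimalFor_of_wellFoundedLT
    (fun z' : Fin (d + 3) → ℤ => A *ᵥ z' ≤ b ∧
      c ⬝ᵥ (fun j => (z j : ℝ)) ≤ c ⬝ᵥ (fun j => (z' j : ℝ))) slack ⟨z, hz, le_rfl⟩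
  refine ⟨z', hz', hle, ?_⟩
  by_contra! hfar
  obtain ⟨w, hfeas, hcw, hnonneg, i, hi, hpos⟩ := exists_int_improving_step hx hopt hd hz' hfar
  have hadd : (fun j => ((z' + w) j : ℝ)) = (fun j => (z' j : ℝ)) + fun j => (w j : ℝ) := by
    ext j
    simp
  have hlt : slack (z' + w) < slack z' := by
    refine Finset.sum_lt_sum (fun i hi => ?_) ⟨i, Finset.mem_filter.2 ⟨Finset.mem_univ i, hi⟩, ?_⟩
    · have := hnonneg i (Finset.mem_filter.1 hi).2
      rw [mulVec_add, Pi.add_apply]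
      omega
    · have : (A *ᵥ (z' + w)) i ≤ b i := hfeas i
      rw [mulVec_add, Pi.add_apply] at this ⊢
      omega
  refine hlt.not_ge (hmin ⟨hfeas, ?_⟩ hlt.le)
  rw [hadd, dotProduct_add]
  linarith

theorem exists_int_optimal_norm_sub_lt
    (hx : x ∈ Set.extremePoints ℝ {x | A.map (Int.cast : ℤ → ℝ) *ᵥ x ≤ fun i => (b i : ℝ)})
    (hopt : ∀ y, A.map (Int.cast : ℤ → ℝ) *ᵥ y ≤ (fun i => (b i : ℝ)) → c ⬝ᵥ y ≤ c ⬝ᵥ x)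
    (hd : d + 3 ≤ (r + 1) * 3) (hfeas : ∃ z, A *ᵥ z ≤ b) :
    ∃ z, A *ᵥ z ≤ b ∧
      (∀ w, A *ᵥ w ≤ b → c ⬝ᵥ (fun j => (w j : ℝ)) ≤ c ⬝ᵥ (fun j => (z j : ℝ))) ∧
      ‖x - fun j => (z j : ℝ)‖ < (r + 1) * (√2 * maxMinor A (d + 2)) := by
  let near := {z : Fin (d + 3) → ℤ | A *ᵥ z ≤ b ∧
    ‖x - fun j => (z j : ℝ)‖ < (r + 1) * (√2 * maxMinor A (d + 2))}
  have hproj {w : Fin (d + 3) → ℤ} (hw : A *ᵥ w ≤ b) :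
      ∃ z ∈ near, c ⬝ᵥ (fun j => (w j : ℝ)) ≤ c ⬝ᵥ (fun j => (z j : ℝ)) := by
    obtain ⟨z, hz, hle, hnorm⟩ := exists_int_dotProduct_le_and_norm_sub_lt hx hopt hd hw
    exact ⟨z, ⟨hz, hnorm⟩, hle⟩
  have hfin : near.Finite := (finite_setOf_norm_sub_intCast_lt x _).subset fun z hz => hz.2
  obtain ⟨z₀, hz₀⟩ := hfeas
  obtain ⟨z₁, hz₁, -⟩ := hproj hz₀
  obtain ⟨z, hz, hmax⟩ := near.exists_max_image (fun z => c ⬝ᵥ fun j => (z j : ℝ)) hfin ⟨z₁, hz₁⟩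
  refine ⟨z, hz.1, fun w hw => ?_, hz.2⟩
  obtain ⟨z', hz', hle⟩ := hproj hw
  exact hle.trans (hmax z' hz')

end Proximity

theorem stmt16_general {m n k : ℕ} (hn : 3 ≤ n) (hk : n ≤ 3 * k) (A : Matrix (Fin m) (Fin n) ℤ)
    (b : Fin m → ℤ) (c : Fin n → ℝ)
    (P : Set (Fin n → ℝ))
    (hP : P = {x | ∀ i, (A.map (Int.cast : ℤ → ℝ)).mulVec x i ≤ (b i : ℝ)})
    (xs : Fin n → ℝ) (hvert : xs ∈ Set.extremePoints ℝ P)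
    (hopt : ∀ x ∈ P, ∑ i, c i * x i ≤ ∑ i, c i * xs i)
    (hfeas : ∃ z : Fin n → ℤ, (fun i => (z i : ℝ)) ∈ P) :
    ∃ z : Fin n → ℤ, (fun i => (z i : ℝ)) ∈ P ∧
      (∀ w : Fin n → ℤ, (fun i => (w i : ℝ)) ∈ P →
        ∑ i, c i * (w i : ℝ) ≤ ∑ i, c i * (z i : ℝ)) ∧
      ‖(fun i => xs i - (z i : ℝ))‖ < k * (√2 * maxMinor A (n - 1)) := by
  subst hP
  obtain ⟨d, rfl⟩ := Nat.exists_eq_add_of_le' hn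
  obtain ⟨r, rfl⟩ : ∃ r, k = r + 1 := Nat.exists_eq_add_one.2 (by omega)
  have hint (z : Fin (d + 3) → ℤ) : (fun i => (z i : ℝ)) ∈
      {x | ∀ i, (A.map (Int.cast : ℤ → ℝ)).mulVec x i ≤ (b i : ℝ)} ↔ A *ᵥ z ≤ b := by
    simp only [Set.mem_ofPred_eq, map_intCast_mulVec_intCast, Int.cast_le, Pi.le_def]
  simp only [hint] at hfeas ⊢
  obtain ⟨z, hz, hmax, hnorm⟩ :=
    exists_int_optimal_norm_sub_lt hvert hopt (hk.trans_eq (mul_comm _ _)) hfeas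
  exact ⟨z, hz, hmax, mod_cast hnorm⟩

/-- Proximity bound `(√2/3) · n · Δ_{n−1}(A)` when `n` is a multiple of 3. -/
theorem stmt16 {m n : ℕ} (hn : 0 < n) (h3 : 3 ∣ n) (A : Matrix (Fin m) (Fin n) ℤ)
    (hrank : (A.map (Int.cast : ℤ → ℚ)).rank = n)
    (b : Fin m → ℤ) (c : Fin n → ℚ)
    (P : Set (Fin n → ℝ))
    (hP : P = {x | ∀ i, (A.map (Int.cast : ℤ → ℝ)).mulVec x i ≤ (b i : ℝ)})
    (xs : Fin n → ℝ) (hxsP : xs ∈ P)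
    (hvert : xs ∈ Set.extremePoints ℝ P)
    (hopt : ∀ x ∈ P, ∑ i, (c i : ℝ) * x i ≤ ∑ i, (c i : ℝ) * xs i)
    (hfeas : ∃ z : Fin n → ℤ, (fun i => (z i : ℝ)) ∈ P) :
    ∃ z : Fin n → ℤ, (fun i => (z i : ℝ)) ∈ P ∧
      (∀ w : Fin n → ℤ, (fun i => (w i : ℝ)) ∈ P →
        ∑ i, (c i : ℝ) * (w i : ℝ) ≤ ∑ i, (c i : ℝ) * (z i : ℝ)) ∧
      ‖(fun i => xs i - (z i : ℝ))‖ < (Real.sqrt 2 / 3 * (n : ℝ)) * (maxMinor A (n - 1) : ℝ) := by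
  obtain ⟨k, rfl⟩ := h3
  obtain ⟨z, hz, hmax, hnorm⟩ := stmt16_general (Nat.le_mul_of_pos_right 3 (by omega)) le_rfl A b
    (fun i => (c i : ℝ)) P hP xs hvert hopt hfeas
  refine ⟨z, hz, hmax, hnorm.trans_eq ?_⟩
  push_cast
  ring
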